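/- arXiv:2110.10740 — 2 statements merged into one kernel-verified Lean document; each statement's English description precedes it below -/
import Mathlib

section
/- Let D = ([n], J) be a nondegenerate discrete polymatroid, let ω : [n] → ℝ_{>0} be a positive weight function, and let k be an integer with 1 ≤ k < rk(D). Then J_ω(k)² = (1 + 1/k)·J_ω(k−1)·J_ω(k+1) if and only if polygirth(D) > k+1. -/
open scoped Classical BigOperators

noncomputable section

variable {n : ℕ}

/-- The rank of a discrete polymatroid: the maximal size `|a| = a_1 + … + a_n` of an
independent multiset. -/
def polyRk (J : Finset (Fin n → ℕ)) : ℕ := J.sup (fun a => ∑ i, a i)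

/-- The independent multisets of size `k`. -/
def polySize (J : Finset (Fin n → ℕ)) (k : ℕ) : Finset (Fin n → ℕ) :=
  J.filter (fun a => (∑ i, a i) = k)

/-- The set of continuations of `a`. -/
def pCont (J : Finset (Fin n → ℕ)) (a : Fin n → ℕ) : Finset (Fin n) :=
  Finset.univ.filter (fun i => a + Pi.single i 1 ∈ J)

/-- The parallel class of `i ∈ Cnt(a)`:  the set of continuations `j` with `j ∼_a i`, i.e.
`j = i` or `a + e_i + e_j ∉ J`. -/
def pParClass (J : Finset (Fin n → ℕ)) (a : Fin n → ℕ) (i : Fin n) : Finset (Fin n) :=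
  (pCont J a).filter (fun j => j = i ∨ a + Pi.single i 1 + Pi.single j 1 ∉ J)

/-- The set `Par(a)` of parallel classes of `a`. -/
def pParClasses (J : Finset (Fin n → ℕ)) (a : Fin n → ℕ) : Finset (Finset (Fin n)) :=
  (pCont J a).image (pParClass J a)

/-- The `k`-continuation number `p(k)` of a discrete polymatroid. -/
def pContNum (J : Finset (Fin n → ℕ)) (k : ℕ) : ℕ :=
  (polySize J k).sup (fun a => (pParClasses J a).card)

/-- The weighted count `J_{ω,t}(k) = Σ_{a ∈ J_k} t^{π(a)}·ω(a)/a!`, where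
`π(a) = Σ_i a_i (a_i - 1)/2`, `ω(a) = Π_i ω(i)^{a_i}` and `a! = Π_i a_i!`. -/
def Jwt (J : Finset (Fin n → ℕ)) (ω : Fin n → ℝ) (t : ℝ) (k : ℕ) : ℝ :=
  ∑ a ∈ polySize J k,
    t ^ (∑ i, Nat.choose (a i) 2) * (∏ i, ω i ^ a i) / (∏ i, ((a i).factorial : ℝ))

/-- The weighted count `J_ω(k) = Σ_{a ∈ J_k} ω(a)/a!`. -/
def Jw (J : Finset (Fin n → ℕ)) (ω : Fin n → ℝ) (k : ℕ) : ℝ :=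
  ∑ a ∈ polySize J k, (∏ i, ω i ^ a i) / (∏ i, ((a i).factorial : ℝ))

/-!
Adjoin a dummy letter `none` that never affects independence. Up to the factor `k!`, the weighted
counts become sums over words in this alphabet, which are values of homogeneous polynomials whose
Hessians (`extensionMatrix`) satisfy a reverse Cauchy–Schwarz inequality. For quadratic polynomials
this holds because parallelism of continuations (two of them cannot be adjoined together) is
transitive; it passes to higher degrees because, by Euler's identity, the Hessian of a polynomial is
a positive combination of the Hessians of its partial derivatives. Testing the inequality against
the dummy letter gives the log-concavity of the counts.

In the equality case, with `r` the common ratio of the three counts, the vector `r • e_none - ω` is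
isotropic and hence lies in the kernel of the Hessian. So equality is inherited by the contraction
of `J` by any element, and after `k - 1` contractions it says that the continuations of every
independent multiset of size `k - 1` or `k` have total weight `r`. By exchange this descends to all
smaller multisets, down to `0`, whose continuations are the whole ground set.
-/

section Multiplicities

variable {ι : Type*} [DecidableEq ι]

theorem sub_single_add_single {a : ι → ℕ} {i : ι} (hi : a i ≠ 0) :
    a - Pi.single i 1 + Pi.single i 1 = a :=
  tsub_add_cancel_of_le <|
    update_le_iff.2 ⟨Nat.one_le_iff_ne_zero.2 hi, fun j _ => Nat.zero_le (a j)⟩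

theorem sum_add_single [Fintype ι] (a : ι → ℕ) (i : ι) :
    ∑ j, (a + Pi.single i 1 : ι → ℕ) j = ∑ j, a j + 1 := by
  simp [Finset.sum_add_distrib]

@[elab_as_elim]
theorem induction_add_single [Finite ι] {P : (ι → ℕ) → Prop} (zero : P 0)
    (add_single : ∀ a i, P a → P (a + Pi.single i 1)) (a : ι → ℕ) : P a := by
  cases nonempty_fintype ι
  induction h : ∑ i, a i generalizing a with
  | zero => exact funext (fun i => Finset.sum_eq_zero_iff.1 h i (Finset.mem_univ i)) ▸ zero
  | succ m ih =>
    obtain ⟨i, -, hi⟩ := Finset.exists_ne_zero_of_sum_ne_zero (h.trans_ne m.succ_ne_zero)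
    rw [← sub_single_add_single hi] at h ⊢
    exact add_single _ i (ih _ (Nat.succ.inj ((sum_add_single _ i).symm.trans h)))

end Multiplicities

section ReverseCauchySchwarz

open Matrix

variable {ι : Type*}

theorem posSemidef_indicator_of_symm_of_trans [Finite ι] {R : ι → ι → Prop}
    (h_symm : ∀ i j, R i j → R j i) (h_trans : ∀ i j l, R i j → R j l → R i l) :
    (of fun i j => if R i j then (1 : ℝ) else 0).PosSemidef := by
  cases nonempty_fintype ι
  have h_class (i j : ι) : R i j ↔ (R i i ∧ R i = R j) ∧ R j j := by
    refine ⟨fun h => ⟨⟨h_trans _ _ _ h (h_symm _ _ h), ?_⟩, h_trans _ _ _ (h_symm _ _ h) h⟩,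
      fun h => h.1.2 ▸ h.2⟩
    ext l
    exact ⟨h_trans _ _ _ (h_symm _ _ h), h_trans _ _ _ h⟩
  -- A class is encoded as the predicate `R i` shared by its members `i`.
  let φ (C : ι → Prop) (i : ι) : ℝ := if R i i ∧ R i = C then 1 else 0
  have h_decomp : (of fun i j => if R i j then (1 : ℝ) else 0) =
      ∑ C, vecMulVec (φ C) (star (φ C)) := by
    ext i j
    rw [Matrix.sum_apply, Fintype.sum_eq_single (R j) fun C hC => ?_]
    · simp only [of_apply, vecMulVec_apply, star_trivial, φ, ite_zero_mul_ite_zero, mul_one,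
        and_true, ← h_class i j]
    · have : φ C j = 0 := if_neg fun h => hC h.2.symm
      rw [vecMulVec_apply, star_trivial, this, mul_zero]
  rw [h_decomp]
  exact posSemidef_sum _ fun C _ => posSemidef_vecMulVec_self_star (φ C)

variable [Fintype ι]

/-- A real matrix `M` is *hyperbolic* at `p` if its quadratic form satisfies the reverse
Cauchy–Schwarz inequality against `p`. For symmetric `M` with `⟨p, M p⟩ > 0` this says that `M` has
exactly one positive eigenvalue; stating it as an inequality keeps the property closed under
limits. -/
def IsHyperbolicAt (M : Matrix ι ι ℝ) (p : ι → ℝ) : Prop :=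
  ∀ x, (x ⬝ᵥ M *ᵥ x) * (p ⬝ᵥ M *ᵥ p) ≤ (x ⬝ᵥ M *ᵥ p) ^ 2

theorem dotProduct_mulVec_comm_of_isSymm {M : Matrix ι ι ℝ} (hM : M.IsSymm) (x y : ι → ℝ) :
    x ⬝ᵥ M *ᵥ y = y ⬝ᵥ M *ᵥ x := by
  rw [dotProduct_mulVec, ← mulVec_transpose, hM.eq, dotProduct_comm]

theorem dotProduct_mulVec_eq_sum (M : Matrix ι ι ℝ) (x y : ι → ℝ) :
    x ⬝ᵥ M *ᵥ y = ∑ i, ∑ j, M i j * x i * y j := by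
  simp only [dotProduct, mulVec, Finset.mul_sum]
  exact Finset.sum_congr rfl fun i _ => Finset.sum_congr rfl fun j _ => by ring

theorem isHyperbolicAt_of_forall_orthogonal {M : Matrix ι ι ℝ} (hM : M.IsSymm) {p : ι → ℝ}
    (hp : 0 ≤ p ⬝ᵥ M *ᵥ p) (h : ∀ x, x ⬝ᵥ M *ᵥ p = 0 → x ⬝ᵥ M *ᵥ x ≤ 0) : IsHyperbolicAt M p := by
  intro x
  rcases hp.eq_or_lt with hp0 | hp_pos
  · rw [← hp0, mul_zero]
    exact sq_nonneg _
  set a := p ⬝ᵥ M *ᵥ p with ha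
  set b := x ⬝ᵥ M *ᵥ p with hb
  have hpx : p ⬝ᵥ M *ᵥ x = b := dotProduct_mulVec_comm_of_isSymm hM p x
  have h_proj : (a • x - b • p) ⬝ᵥ M *ᵥ (a • x - b • p) ≤ 0 := by
    refine h _ ?_
    rw [sub_dotProduct, smul_dotProduct, smul_dotProduct, ← ha, ← hb, smul_eq_mul, smul_eq_mul]
    ring
  have h_expand : (a • x - b • p) ⬝ᵥ M *ᵥ (a • x - b • p) =
      a * ((x ⬝ᵥ M *ᵥ x) * a - b ^ 2) := by
    simp only [mulVec_sub, mulVec_smul, sub_dotProduct, dotProduct_sub, smul_dotProduct,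
      dotProduct_smul, smul_eq_mul, hpx, ← ha, ← hb]
    ring
  exact sub_nonpos.1 (nonpos_of_mul_nonpos_right (h_expand ▸ h_proj) hp_pos)

/-- Moving a test vector `y` along `v` changes `⟨y, M y⟩` linearly and leaves `⟨y, M p⟩` fixed, so
the reverse Cauchy–Schwarz inequality forces the slope `⟨y, M v⟩` to vanish. -/
theorem IsHyperbolicAt.mulVec_eq_zero_of_isotropic {M : Matrix ι ι ℝ} {p : ι → ℝ}
    (h : IsHyperbolicAt M p) (hM : M.IsSymm) (hp : 0 < p ⬝ᵥ M *ᵥ p) {v : ι → ℝ}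
    (hvp : v ⬝ᵥ M *ᵥ p = 0) (hvv : v ⬝ᵥ M *ᵥ v = 0) : M *ᵥ v = 0 := by
  refine dotProduct_eq_zero _ fun y => ?_
  rw [dotProduct_comm]
  by_contra hne
  set κ := y ⬝ᵥ M *ᵥ v with hκ
  set a := p ⬝ᵥ M *ᵥ p
  have h_line (t : ℝ) : (2 * t * κ + y ⬝ᵥ M *ᵥ y) * a ≤ (y ⬝ᵥ M *ᵥ p) ^ 2 := by
    have h_quad : (t • v + y) ⬝ᵥ M *ᵥ (t • v + y) = 2 * t * κ + y ⬝ᵥ M *ᵥ y := by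
      simp only [mulVec_add, mulVec_smul, add_dotProduct, dotProduct_add, smul_dotProduct,
        dotProduct_smul, smul_eq_mul, hvv, dotProduct_mulVec_comm_of_isSymm hM v y, ← hκ]
      ring
    have h_lin : (t • v + y) ⬝ᵥ M *ᵥ p = y ⬝ᵥ M *ᵥ p := by
      rw [add_dotProduct, smul_dotProduct, hvp, smul_zero, zero_add]
    simpa only [h_quad, h_lin] using h (t • v + y)
  have h_large := h_line (((y ⬝ᵥ M *ᵥ p) ^ 2 + 1 - (y ⬝ᵥ M *ᵥ y) * a) / (2 * κ * a))
  field_simp at h_large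
  linarith

theorem sq_dotProduct_mulVec_le_of_posSemidef {P : Matrix ι ι ℝ} (hP : P.PosSemidef)
    (x y : ι → ℝ) : (x ⬝ᵥ P *ᵥ y) ^ 2 ≤ (x ⬝ᵥ P *ᵥ x) * (y ⬝ᵥ P *ᵥ y) := by
  have h_nonneg (z : ι → ℝ) : 0 ≤ toBilin' P z z := by
    simpa only [toBilin'_apply', star_trivial] using hP.dotProduct_mulVec_nonneg z
  have hP_symm : P.IsSymm := (conjTranspose_eq_transpose_of_trivial P).symm.trans hP.isHermitian
  have h_symm : LinearMap.IsSymm (toBilin' P) := ⟨fun z w => by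
    simpa only [toBilin'_apply', RingHom.id_apply] using
      dotProduct_mulVec_comm_of_isSymm hP_symm z w⟩
  simpa only [toBilin'_apply'] using
    LinearMap.BilinForm.apply_sq_le_of_symm (toBilin' P) h_nonneg h_symm x y

theorem dotProduct_mulVec_nonpos_of_eq_vecMulVec_sub {M P : Matrix ι ι ℝ} {σ : ι → ℝ}
    (hP : P.PosSemidef) (hM : M = vecMulVec σ σ - P) {p : ι → ℝ} (hσp : σ ⬝ᵥ p ≠ 0)
    (hp : 0 ≤ p ⬝ᵥ M *ᵥ p) {x : ι → ℝ} (hx : x ⬝ᵥ M *ᵥ p = 0) : x ⬝ᵥ M *ᵥ x ≤ 0 := by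
  have h_form (y z : ι → ℝ) : y ⬝ᵥ M *ᵥ z = (σ ⬝ᵥ y) * (σ ⬝ᵥ z) - y ⬝ᵥ P *ᵥ z := by
    rw [hM, sub_mulVec, dotProduct_sub, vecMulVec_mulVec, dotProduct_comm σ y]
    simp [mul_comm]
  rw [h_form] at hx hp ⊢
  have h_xx : 0 ≤ x ⬝ᵥ P *ᵥ x := hP.dotProduct_mulVec_nonneg x
  have h_scaled : (σ ⬝ᵥ x) ^ 2 * (σ ⬝ᵥ p) ^ 2 ≤ (x ⬝ᵥ P *ᵥ x) * (σ ⬝ᵥ p) ^ 2 :=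
    calc (σ ⬝ᵥ x) ^ 2 * (σ ⬝ᵥ p) ^ 2 = (x ⬝ᵥ P *ᵥ p) ^ 2 := by
          rw [← mul_pow, sub_eq_zero.1 hx]
      _ ≤ (x ⬝ᵥ P *ᵥ x) * (p ⬝ᵥ P *ᵥ p) := sq_dotProduct_mulVec_le_of_posSemidef hP x p
      _ ≤ (x ⬝ᵥ P *ᵥ x) * (σ ⬝ᵥ p) ^ 2 := by
          gcongr
          linarith
  linarith [le_of_mul_le_mul_right h_scaled (by positivity)]

/-- The Dirichlet energy of `h / p` on the graph with edge weights `M i j * p i * p j`. -/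
theorem sum_mul_sub_sq_eq {M : Matrix ι ι ℝ} (hM : M.IsSymm) {p : ι → ℝ} (hp : ∀ i, 0 < p i)
    (h : ι → ℝ) :
    ∑ i, ∑ j, M i j * p i * p j * (h i / p i - h j / p j) ^ 2 =
      2 * (∑ i, (M *ᵥ p) i / p i * h i ^ 2 - h ⬝ᵥ M *ᵥ h) := by
  have h_diag : ∑ i, ∑ j, M i j * p j * (h i ^ 2 / p i) = ∑ i, (M *ᵥ p) i / p i * h i ^ 2 := by
    refine Finset.sum_congr rfl fun i _ => ?_
    rw [← Finset.sum_mul, mulVec, dotProduct]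
    ring
  have h_diag' : ∑ i, ∑ j, M i j * p i * (h j ^ 2 / p j) = ∑ i, (M *ᵥ p) i / p i * h i ^ 2 := by
    rw [← h_diag, Finset.sum_comm]
    simp only [hM.apply]
  have h_term (i j : ι) : M i j * p i * p j * (h i / p i - h j / p j) ^ 2 =
      M i j * p j * (h i ^ 2 / p i) + M i j * p i * (h j ^ 2 / p j) - 2 * (M i j * h i * h j) := by
    have := (hp i).ne'
    have := (hp j).ne'
    field_simp
    ring
  simp only [h_term, Finset.sum_sub_distrib, Finset.sum_add_distrib, ← Finset.mul_sum, h_diag,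
    h_diag', dotProduct_mulVec_eq_sum]
  ring

theorem dotProduct_mulVec_le_sum_div_mul_sq {M : Matrix ι ι ℝ} (hM : M.IsSymm)
    (hM0 : ∀ i j, 0 ≤ M i j) {p : ι → ℝ} (hp : ∀ i, 0 < p i) (h : ι → ℝ) :
    h ⬝ᵥ M *ᵥ h ≤ ∑ i, (M *ᵥ p) i / p i * h i ^ 2 := by
  have h_energy : 0 ≤ ∑ i, ∑ j, M i j * p i * p j * (h i / p i - h j / p j) ^ 2 :=
    Finset.sum_nonneg fun i _ => Finset.sum_nonneg fun j _ =>
      mul_nonneg (mul_nonneg (mul_nonneg (hM0 i j) (hp i).le) (hp j).le) (sq_nonneg _)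
  rw [sum_mul_sub_sq_eq hM hp] at h_energy
  linarith

theorem div_eq_div_of_dotProduct_mulVec_eq {M : Matrix ι ι ℝ} (hM : M.IsSymm)
    (hM0 : ∀ i j, 0 ≤ M i j) {p : ι → ℝ} (hp : ∀ i, 0 < p i) {h : ι → ℝ}
    (h_eq : h ⬝ᵥ M *ᵥ h = ∑ i, (M *ᵥ p) i / p i * h i ^ 2) {i j : ι} (hij : 0 < M i j) :
    h i / p i = h j / p j := by
  have h_nonneg (i j : ι) : 0 ≤ M i j * p i * p j * (h i / p i - h j / p j) ^ 2 :=
    mul_nonneg (mul_nonneg (mul_nonneg (hM0 i j) (hp i).le) (hp j).le) (sq_nonneg _)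
  have h_energy : ∑ i, ∑ j, M i j * p i * p j * (h i / p i - h j / p j) ^ 2 = 0 := by
    rw [sum_mul_sub_sq_eq hM hp, h_eq, sub_self, mul_zero]
  have h_row := (Fintype.sum_eq_zero_iff_of_nonneg
    fun i => Finset.sum_nonneg fun j _ => h_nonneg i j).1 h_energy
  have h_entry := congrFun ((Fintype.sum_eq_zero_iff_of_nonneg (h_nonneg i)).1 (congrFun h_row i)) j
  have h_sq := (mul_eq_zero.1 h_entry).resolve_left
    (mul_pos (mul_pos hij (hp i)) (hp j)).ne'
  exact sub_eq_zero.1 (pow_eq_zero_iff two_ne_zero |>.1 h_sq)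

theorem exists_mulVec_eq_smul_of_dotProduct_mulVec_eq {M : Matrix ι ι ℝ} (hM : M.IsSymm)
    (hM0 : ∀ i j, 0 ≤ M i j) {p : ι → ℝ} (hp : ∀ i, 0 < p i) {o : ι}
    (ho : ∀ i, (M *ᵥ p) i ≠ 0 → 0 < M i o) {h : ι → ℝ}
    (h_eq : h ⬝ᵥ M *ᵥ h = ∑ i, (M *ᵥ p) i / p i * h i ^ 2) : ∃ c : ℝ, M *ᵥ h = c • M *ᵥ p := by
  refine ⟨h o / p o, ?_⟩
  rw [← mulVec_smul]
  ext i
  refine Finset.sum_congr rfl fun j _ => ?_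
  change M i j * h j = M i j * (h o / p o * p j)
  rcases (hM0 i j).eq_or_lt with hij | hij
  · rw [← hij, zero_mul, zero_mul]
  have hw : (M *ᵥ p) j ≠ 0 := by
    refine (Finset.sum_pos' (fun l _ => mul_nonneg (hM0 j l) (hp l).le)
      ⟨i, Finset.mem_univ i, ?_⟩).ne'
    exact mul_pos (hM.apply i j ▸ hij) (hp i)
  rw [← div_eq_div_of_dotProduct_mulVec_eq hM hM0 hp h_eq (ho j hw),
    div_mul_cancel₀ _ (hp j).ne']

/-- Rescaled so that `p` becomes a Perron vector, `M` is a self-adjoint operator with largest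
eigenvalue `1`; the vertex `o` makes that eigenvalue simple, and the equation is solvable by the
Fredholm alternative. Rows with `(M *ᵥ p) i = 0` vanish, so the junk value `p i / 0 = 0` does no
harm. -/
theorem exists_eq_sub_div_mul_mulVec {M : Matrix ι ι ℝ} (hM : M.IsSymm) (hM0 : ∀ i j, 0 ≤ M i j)
    {p : ι → ℝ} (hp : ∀ i, 0 < p i) {o : ι} (ho : ∀ i, (M *ᵥ p) i ≠ 0 → 0 < M i o) {x : ι → ℝ}
    (hx : x ⬝ᵥ M *ᵥ p = 0) : ∃ z, x = z - p / (M *ᵥ p) * M *ᵥ z := by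
  let T : (ι → ℝ) →ₗ[ℝ] (ι → ℝ) := LinearMap.id - LinearMap.mulLeft ℝ (p / (M *ᵥ p)) ∘ₗ M.mulVecLin
  suffices x ∈ LinearMap.range T by
    obtain ⟨z, hz⟩ := this
    exact ⟨z, hz.symm⟩
  by_contra hxT
  obtain ⟨f, hfx, hfT⟩ := Submodule.exists_le_ker_of_notMem hxT
  obtain ⟨g, rfl⟩ := (dotProductEquiv ℝ ι).surjective f
  have h_ker (z : ι → ℝ) : g ⬝ᵥ (z - p / (M *ᵥ p) * M *ᵥ z) = 0 := hfT ⟨z, rfl⟩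
  set h := p / (M *ᵥ p) * g with hh
  have hMh : M *ᵥ h = g := by
    refine dotProduct_eq _ _ fun z => ?_
    have h_move : g ⬝ᵥ (p / (M *ᵥ p) * M *ᵥ z) = h ⬝ᵥ M *ᵥ z :=
      Finset.sum_congr rfl fun i _ => by rw [hh, Pi.mul_apply, Pi.mul_apply]; ring
    rw [dotProduct_comm, dotProduct_mulVec_comm_of_isSymm hM, ← h_move,
      ← sub_eq_zero.1 ((dotProduct_sub _ _ _).symm.trans (h_ker z))]
  have h_eq : h ⬝ᵥ M *ᵥ h = ∑ i, (M *ᵥ p) i / p i * h i ^ 2 := by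
    rw [hMh]
    refine Finset.sum_congr rfl fun i _ => ?_
    have := (hp i).ne'
    rw [hh, Pi.mul_apply, Pi.div_apply]
    by_cases hi : (M *ᵥ p) i = 0
    · simp only [hi, div_zero, zero_div, zero_mul]
    · field_simp
  obtain ⟨c, hc⟩ := exists_mulVec_eq_smul_of_dotProduct_mulVec_eq hM hM0 hp ho h_eq
  refine hfx ?_
  rw [dotProductEquiv_apply_apply, ← hMh, hc, smul_dotProduct, dotProduct_comm, hx, smul_zero]

theorem dotProduct_mulVec_nonpos_of_le_sum_div_mul_sq {M : Matrix ι ι ℝ} (hM : M.IsSymm)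
    (hM0 : ∀ i j, 0 ≤ M i j) {p : ι → ℝ} (hp : ∀ i, 0 < p i) {o : ι}
    (ho : ∀ i, (M *ᵥ p) i ≠ 0 → 0 < M i o)
    (h_le : ∀ z, z ⬝ᵥ M *ᵥ z ≤ ∑ l, p l / (M *ᵥ p) l * (M *ᵥ z) l ^ 2) {x : ι → ℝ}
    (hx : x ⬝ᵥ M *ᵥ p = 0) : x ⬝ᵥ M *ᵥ x ≤ 0 := by
  obtain ⟨z, rfl⟩ := exists_eq_sub_div_mul_mulVec hM hM0 hp ho hx
  set w := M *ᵥ p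
  set h := p / w * M *ᵥ z with hh
  have h_cross : h ⬝ᵥ M *ᵥ z = ∑ l, p l / w l * (M *ᵥ z) l ^ 2 :=
    Finset.sum_congr rfl fun l _ => by rw [hh, Pi.mul_apply, Pi.div_apply]; ring
  have h_image : h ⬝ᵥ M *ᵥ h ≤ h ⬝ᵥ M *ᵥ z :=
    calc h ⬝ᵥ M *ᵥ h ≤ ∑ l, w l / p l * h l ^ 2 := dotProduct_mulVec_le_sum_div_mul_sq hM hM0 hp h
      _ = h ⬝ᵥ M *ᵥ z := by
        rw [h_cross]
        refine Finset.sum_congr rfl fun l _ => ?_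
        have := (hp l).ne'
        rw [hh, Pi.mul_apply, Pi.div_apply]
        by_cases hl : w l = 0
        · simp only [hl, div_zero, zero_div, zero_mul]
        · field_simp
  calc (z - h) ⬝ᵥ M *ᵥ (z - h) = (z ⬝ᵥ M *ᵥ z - h ⬝ᵥ M *ᵥ z) + (h ⬝ᵥ M *ᵥ h - h ⬝ᵥ M *ᵥ z) := by
        rw [mulVec_sub, dotProduct_sub, sub_dotProduct, sub_dotProduct,
          dotProduct_mulVec_comm_of_isSymm hM z h]
        ring
    _ ≤ 0 := add_nonpos (sub_nonpos.2 (h_cross ▸ h_le z)) (sub_nonpos.2 h_image)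

end ReverseCauchySchwarz

section WordSums

variable {ι : Type*} [DecidableEq ι]

/-- The multiset of a letter of the homogenized alphabet `Option ι`: the letters `some i` are the
elements of the ground set, and the dummy letter `none` is invisible. -/
def stepVec (l : Option ι) : ι → ℕ := l.elim 0 (Pi.single · 1)

theorem stepVec_none : stepVec (none : Option ι) = 0 := rfl

theorem stepVec_some (i : ι) : stepVec (some i) = Pi.single i 1 := rfl

/-- Continuations `l` and `m` of `s` are parallel if they cannot be adjoined to `s` together. -/
def IsParallel (J : Set (ι → ℕ)) (s : ι → ℕ) (l m : Option ι) : Prop :=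
  (s + stepVec l ∈ J ∧ s + stepVec m ∈ J) ∧ s + stepVec l + stepVec m ∉ J

theorem IsParallel.symm {J : Set (ι → ℕ)} {s : ι → ℕ} {l m : Option ι} (h : IsParallel J s l m) :
    IsParallel J s m l :=
  ⟨h.1.symm, add_right_comm s (stepVec l) (stepVec m) ▸ h.2⟩

variable [Fintype ι] {J : Set (ι → ℕ)}

/-- The axioms of a discrete polymatroid on the ground set `ι`, for its set `J` of independent
multisets. Finiteness of `J` is not imposed. -/
structure IsPolymatroid (J : Set (ι → ℕ)) : Prop where
  nonempty : J.Nonempty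
  isLowerSet : IsLowerSet J
  exchange : ∀ ⦃a⦄, a ∈ J → ∀ ⦃b⦄, b ∈ J → ∑ i, a i < ∑ i, b i →
    ∃ i, a i < b i ∧ a + Pi.single i 1 ∈ J

theorem IsParallel.trans (hJ : IsPolymatroid J) {s : ι → ℕ} {l m q : Option ι}
    (hlm : IsParallel J s l m) (hmq : IsParallel J s m q) : IsParallel J s l q := by
  refine ⟨⟨hlm.1.1, hmq.1.2⟩, fun hlq => ?_⟩
  have h_some {a b : Option ι} (h : IsParallel J s a b) : a ≠ none := by
    rintro rfl
    exact h.2 h.1.2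
  obtain ⟨i, rfl⟩ := Option.ne_none_iff_exists'.1 (h_some hlm)
  obtain ⟨j, rfl⟩ := Option.ne_none_iff_exists'.1 (h_some hmq)
  obtain ⟨r, rfl⟩ := Option.ne_none_iff_exists'.1 (h_some hmq.symm)
  simp only [IsParallel, stepVec_some] at hlm hmq hlq
  obtain ⟨t, ht_lt, ht⟩ := hJ.exchange hmq.1.1 hlq (by simp only [sum_add_single]; omega)
  have ht_mem : t = i ∨ t = r := by
    by_contra! h
    simp [Pi.single_eq_of_ne h.1, Pi.single_eq_of_ne h.2] at ht_lt
  rcases ht_mem with rfl | rfl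
  · exact hlm.2 (add_right_comm s _ _ ▸ ht)
  · exact hmq.2 ht

/-- The sum of `p l₁ ⋯ p lₘ` over the words `l₁ ⋯ lₘ` that extend the multiset `s` to an
independent one. -/
def wordSum (J : Set (ι → ℕ)) (p : Option ι → ℝ) : ℕ → (ι → ℕ) → ℝ
  | 0, s => if s ∈ J then 1 else 0
  | m + 1, s => ∑ l, p l * wordSum J p m (s + stepVec l)

theorem wordSum_zero (J : Set (ι → ℕ)) (p : Option ι → ℝ) (s : ι → ℕ) :
    wordSum J p 0 s = if s ∈ J then 1 else 0 := rfl

theorem wordSum_succ (J : Set (ι → ℕ)) (p : Option ι → ℝ) (m : ℕ) (s : ι → ℕ) :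
    wordSum J p (m + 1) s = ∑ l, p l * wordSum J p m (s + stepVec l) := rfl

variable {p : Option ι → ℝ}

theorem wordSum_nonneg (hp : ∀ l, 0 ≤ p l) (m : ℕ) (s : ι → ℕ) : 0 ≤ wordSum J p m s := by
  induction m generalizing s with
  | zero => rw [wordSum_zero]; positivity
  | succ m ih => exact Finset.sum_nonneg fun l _ => mul_nonneg (hp l) (ih _)

theorem wordSum_of_notMem (hJ : IsLowerSet J) (p : Option ι → ℝ) (m : ℕ) {s : ι → ℕ}
    (hs : s ∉ J) : wordSum J p m s = 0 := by
  induction m generalizing s with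
  | zero => exact if_neg hs
  | succ m ih =>
    refine Finset.sum_eq_zero fun l _ => ?_
    rw [ih fun h => hs (hJ le_self_add h), mul_zero]

theorem wordSum_pos_of_mem (hp : ∀ l, 0 < p l) (m : ℕ) {s : ι → ℕ} (hs : s ∈ J) :
    0 < wordSum J p m s := by
  induction m generalizing s with
  | zero => rw [wordSum_zero, if_pos hs]; exact one_pos
  | succ m ih =>
    have hp0 (l : Option ι) : 0 ≤ p l := (hp l).le
    exact Finset.sum_pos' (fun l _ => mul_nonneg (hp0 l) (wordSum_nonneg hp0 _ _))
      ⟨none, Finset.mem_univ _, mul_pos (hp none) (ih hs)⟩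

theorem continuous_wordSum (J : Set (ι → ℕ)) (m : ℕ) (s : ι → ℕ) :
    Continuous fun p => wordSum J p m s := by
  induction m generalizing s with
  | zero => exact continuous_const
  | succ m ih => exact continuous_finsetSum _ fun l _ => (continuous_apply l).mul (ih _)

open Matrix

/-- The matrix of the word sums after two further letters; up to a positive factor, the Hessian at
`p` of the homogeneous polynomial `p ↦ wordSum J p (m + 2) s`. -/
def extensionMatrix (J : Set (ι → ℕ)) (p : Option ι → ℝ) (m : ℕ) (s : ι → ℕ) :
    Matrix (Option ι) (Option ι) ℝ :=
  of fun l l' => wordSum J p m (s + stepVec l + stepVec l')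

theorem isSymm_extensionMatrix (J : Set (ι → ℕ)) (p : Option ι → ℝ) (m : ℕ) (s : ι → ℕ) :
    (extensionMatrix J p m s).IsSymm :=
  IsSymm.ext fun l l' => congrArg (wordSum J p m) (add_right_comm s (stepVec l') (stepVec l))

theorem extensionMatrix_mulVec_self (J : Set (ι → ℕ)) (p : Option ι → ℝ) (m : ℕ) (s : ι → ℕ)
    (l : Option ι) : (extensionMatrix J p m s *ᵥ p) l = wordSum J p (m + 1) (s + stepVec l) :=
  Finset.sum_congr rfl fun _ _ => mul_comm _ _

theorem dotProduct_extensionMatrix_mulVec_self (J : Set (ι → ℕ)) (p : Option ι → ℝ) (m : ℕ)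
    (s : ι → ℕ) : p ⬝ᵥ extensionMatrix J p m s *ᵥ p = wordSum J p (m + 2) s :=
  Finset.sum_congr rfl fun l _ => by rw [extensionMatrix_mulVec_self]

theorem extensionMatrix_succ (J : Set (ι → ℕ)) (p : Option ι → ℝ) (m : ℕ) (s : ι → ℕ) :
    extensionMatrix J p (m + 1) s = ∑ l, p l • extensionMatrix J p m (s + stepVec l) := by
  ext i j
  simp only [Matrix.sum_apply, Matrix.smul_apply, smul_eq_mul, extensionMatrix, of_apply,
    wordSum_succ]
  refine Finset.sum_congr rfl fun l _ => ?_
  rw [add_right_comm s (stepVec l), add_right_comm _ (stepVec l)]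

theorem extensionMatrix_succ_mulVec (J : Set (ι → ℕ)) (p : Option ι → ℝ) (m : ℕ) (s : ι → ℕ)
    (x : Option ι → ℝ) (l : Option ι) : (extensionMatrix J p (m + 1) s *ᵥ x) l =
      x ⬝ᵥ extensionMatrix J p m (s + stepVec l) *ᵥ p :=
  Finset.sum_congr rfl fun l' _ => by rw [extensionMatrix_mulVec_self, mul_comm]; rfl

theorem extensionMatrix_of_notMem (hJ : IsLowerSet J) (p : Option ι → ℝ) (m : ℕ) {s : ι → ℕ}
    (hs : s ∉ J) : extensionMatrix J p m s = 0 := by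
  ext l l'
  exact wordSum_of_notMem hJ p m fun h => hs (hJ (le_self_add.trans le_self_add) h)

theorem extensionMatrix_zero_eq_sub (hJ : IsLowerSet J) (p : Option ι → ℝ) (s : ι → ℕ) :
    extensionMatrix J p 0 s =
      vecMulVec (fun l => if s + stepVec l ∈ J then 1 else 0)
        (fun l => if s + stepVec l ∈ J then 1 else 0) -
      of fun l l' => if IsParallel J s l l' then 1 else 0 := by
  ext l l'
  have hl (h : s + stepVec l + stepVec l' ∈ J) : s + stepVec l ∈ J := hJ le_self_add h
  have hl' (h : s + stepVec l + stepVec l' ∈ J) : s + stepVec l' ∈ J :=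
    hJ le_self_add (add_right_comm s (stepVec l) (stepVec l') ▸ h)
  simp only [extensionMatrix, wordSum_zero, IsParallel, Matrix.sub_apply, of_apply,
    vecMulVec_apply, ite_zero_mul_ite_zero]
  split_ifs <;> simp_all

theorem isHyperbolicAt_extensionMatrix_zero (hJ : IsPolymatroid J) (hp : ∀ l, 0 < p l) (s : ι → ℕ) :
    IsHyperbolicAt (extensionMatrix J p 0 s) p := by
  by_cases hs : s ∈ J
  swap
  · simp [extensionMatrix_of_notMem hJ.isLowerSet p 0 hs, IsHyperbolicAt]
  have hp0 : 0 ≤ p ⬝ᵥ extensionMatrix J p 0 s *ᵥ p :=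
    dotProduct_extensionMatrix_mulVec_self J p 0 s ▸ wordSum_nonneg (fun l => (hp l).le) _ _
  have hσp : 0 < (fun l => if s + stepVec l ∈ J then (1 : ℝ) else 0) ⬝ᵥ p :=
    Finset.sum_pos' (fun l _ => mul_nonneg (by positivity) (hp l).le)
      ⟨none, Finset.mem_univ _, by simp [stepVec_none, hs, hp none]⟩
  have h_par : (of fun l l' => if IsParallel J s l l' then (1 : ℝ) else 0).PosSemidef :=
    posSemidef_indicator_of_symm_of_trans (fun _ _ => IsParallel.symm)
      fun _ _ _ => IsParallel.trans hJ
  exact isHyperbolicAt_of_forall_orthogonal (isSymm_extensionMatrix J p 0 s) hp0 fun x hx =>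
    dotProduct_mulVec_nonpos_of_eq_vecMulVec_sub h_par
      (extensionMatrix_zero_eq_sub hJ.isLowerSet p s) hσp.ne' hp0 hx

theorem dotProduct_extensionMatrix_succ_mulVec_le (hJ : IsLowerSet J) (hp : ∀ l, 0 < p l) {m : ℕ}
    (ih : ∀ s, IsHyperbolicAt (extensionMatrix J p m s) p) (s : ι → ℕ) (z : Option ι → ℝ) :
    z ⬝ᵥ extensionMatrix J p (m + 1) s *ᵥ z ≤
      ∑ l, p l / (extensionMatrix J p (m + 1) s *ᵥ p) l *
        (extensionMatrix J p (m + 1) s *ᵥ z) l ^ 2 := by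
  have h_split : z ⬝ᵥ extensionMatrix J p (m + 1) s *ᵥ z =
      ∑ l, p l * (z ⬝ᵥ extensionMatrix J p m (s + stepVec l) *ᵥ z) := by
    simp only [extensionMatrix_succ, sum_mulVec, dotProduct_sum, smul_mulVec, dotProduct_smul,
      smul_eq_mul]
  rw [h_split]
  refine Finset.sum_le_sum fun l _ => ?_
  by_cases hl : s + stepVec l ∈ J
  · have h_hyp := ih (s + stepVec l) z
    have hw : 0 < p ⬝ᵥ extensionMatrix J p m (s + stepVec l) *ᵥ p :=
      dotProduct_extensionMatrix_mulVec_self J p m _ ▸ wordSum_pos_of_mem hp _ hl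
    rw [extensionMatrix_succ_mulVec, extensionMatrix_succ_mulVec, div_mul_eq_mul_div, mul_div_assoc]
    exact mul_le_mul_of_nonneg_left ((le_div_iff₀ hw).2 h_hyp) (hp l).le
  · simp [extensionMatrix_succ_mulVec, extensionMatrix_of_notMem hJ p m hl]

theorem isHyperbolicAt_extensionMatrix_of_pos (hJ : IsPolymatroid J) (hp : ∀ l, 0 < p l) (m : ℕ)
    (s : ι → ℕ) : IsHyperbolicAt (extensionMatrix J p m s) p := by
  induction m generalizing s with
  | zero => exact isHyperbolicAt_extensionMatrix_zero hJ hp s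
  | succ m ih =>
    have hp0 : 0 ≤ p ⬝ᵥ extensionMatrix J p (m + 1) s *ᵥ p :=
      dotProduct_extensionMatrix_mulVec_self J p (m + 1) s ▸
        wordSum_nonneg (fun l => (hp l).le) _ _
    have h_none (l : Option ι) (hl : (extensionMatrix J p (m + 1) s *ᵥ p) l ≠ 0) :
        0 < extensionMatrix J p (m + 1) s l none := by
      rw [extensionMatrix_mulVec_self] at hl
      refine wordSum_pos_of_mem hp _ ?_
      rw [stepVec_none, add_zero]
      exact not_imp_comm.1 (wordSum_of_notMem hJ.isLowerSet p _) hl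
    exact isHyperbolicAt_of_forall_orthogonal (isSymm_extensionMatrix J p _ s) hp0 fun x hx =>
      dotProduct_mulVec_nonpos_of_le_sum_div_mul_sq (isSymm_extensionMatrix J p _ s)
        (fun l l' => wordSum_nonneg (fun l => (hp l).le) _ _) hp h_none
        (dotProduct_extensionMatrix_succ_mulVec_le hJ.isLowerSet hp ih s) hx

theorem isHyperbolicAt_extensionMatrix (hJ : IsPolymatroid J) (hp : ∀ l, 0 ≤ p l) (m : ℕ)
    (s : ι → ℕ) : IsHyperbolicAt (extensionMatrix J p m s) p := by
  have h_entry (l l' : Option ι) : Continuous fun q => extensionMatrix J q m s l l' :=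
    continuous_wordSum J m _
  have h_closed : IsClosed {q | IsHyperbolicAt (extensionMatrix J q m s) q} := by
    have h_cont : Continuous fun q => extensionMatrix J q m s := continuous_matrix h_entry
    simp only [IsHyperbolicAt, Set.ofPred_forall]
    exact isClosed_iInter fun x => isClosed_le (by fun_prop) (by fun_prop)
  have h_closure : p ∈ closure (Set.univ.pi fun _ => Set.Ioi 0) := by
    simpa only [closure_pi_set, closure_Ioi, Set.mem_univ_pi, Set.mem_Ici] using hp
  exact h_closed.closure_subset_iff.2
    (fun q (hq : q ∈ Set.univ.pi fun _ => Set.Ioi 0) =>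
      isHyperbolicAt_extensionMatrix_of_pos hJ (fun l => hq l trivial) m s) h_closure

end WordSums

section Equality

open Matrix

variable {ι : Type*} {ω : ι → ℝ}

theorem eq_of_subset_of_sum_eq (hω : ∀ i, 0 < ω i) {A B : Finset ι} (hAB : A ⊆ B)
    (h : ∑ i ∈ A, ω i = ∑ i ∈ B, ω i) : A = B := by
  by_contra hne
  obtain ⟨i, hiB, hiA⟩ := Finset.exists_of_ssubset (hAB.ssubset_of_ne hne)
  exact (Finset.sum_lt_sum_of_subset hAB hiB hiA (hω i) fun j _ _ => (hω j).le).ne h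

/-- The extension of a weight to the homogenized alphabet that gives the dummy letter weight `0`. -/
def extendZero (ω : ι → ℝ) (l : Option ι) : ℝ := l.elim 0 ω

theorem extendZero_nonneg (hω : ∀ i, 0 ≤ ω i) (l : Option ι) : 0 ≤ extendZero ω l := by
  cases l with
  | none => exact le_rfl
  | some i => exact hω i

variable [Fintype ι] [DecidableEq ι] {J : Set (ι → ℕ)}

theorem wordSum_extendZero_succ (J : Set (ι → ℕ)) (ω : ι → ℝ) (m : ℕ) (s : ι → ℕ) :
    wordSum J (extendZero ω) (m + 1) s =
      ∑ i, ω i * wordSum J (extendZero ω) m (s + Pi.single i 1) := by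
  simp [wordSum_succ, extendZero, stepVec, Fintype.sum_option]

theorem wordSum_extendZero_pos (hJ : IsPolymatroid J) (hω : ∀ i, 0 < ω i) {s b : ι → ℕ}
    (hs : s ∈ J) (hb : b ∈ J) {m : ℕ} (hm : ∑ i, s i + m ≤ ∑ i, b i) :
    0 < wordSum J (extendZero ω) m s := by
  induction m generalizing s with
  | zero => rw [wordSum_zero, if_pos hs]; exact one_pos
  | succ m ih =>
    obtain ⟨i, -, hi⟩ := hJ.exchange hs hb (by omega)
    rw [wordSum_extendZero_succ]
    refine Finset.sum_pos' (fun j _ => mul_nonneg (hω j).le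
      (wordSum_nonneg (extendZero_nonneg fun j => (hω j).le) _ _)) ⟨i, Finset.mem_univ i, ?_⟩
    exact mul_pos (hω i) (ih hi (by rw [sum_add_single]; omega))

theorem wordSum_extendZero_of_forall_mem (ω : ι → ℝ) {m : ℕ} {s : ι → ℕ}
    (h : ∀ a : ι → ℕ, ∑ i, a i ≤ ∑ i, s i + m → a ∈ J) :
    wordSum J (extendZero ω) m s = (∑ i, ω i) ^ m := by
  induction m generalizing s with
  | zero => rw [wordSum_zero, if_pos (h s le_rfl), pow_zero]
  | succ m ih =>
    rw [wordSum_extendZero_succ, pow_succ', Finset.sum_mul]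
    refine Finset.sum_congr rfl fun i _ => ?_
    rw [ih fun a ha => h a (by rw [sum_add_single] at ha; omega)]

theorem wordSum_mul_wordSum_le_sq (hJ : IsPolymatroid J) {p : Option ι → ℝ} (hp : ∀ l, 0 ≤ p l)
    (m : ℕ) (s : ι → ℕ) :
    wordSum J p m s * wordSum J p (m + 2) s ≤ wordSum J p (m + 1) s ^ 2 := by
  have h := isHyperbolicAt_extensionMatrix hJ hp m s (Pi.single none 1)
  have h_entry : extensionMatrix J p m s none none = wordSum J p m s := by
    simp only [extensionMatrix, of_apply, stepVec_none, add_zero]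
  simpa only [single_one_dotProduct, mulVec_single_one, extensionMatrix_mulVec_self,
    dotProduct_extensionMatrix_mulVec_self, stepVec_none, add_zero, col_apply, h_entry] using h

/-- The word sums of lengths `m`, `m + 1` and `m + 2` at `s` form a geometric progression of
ratio `r`. -/
def IsGeometricAt (J : Set (ι → ℕ)) (ω : ι → ℝ) (r : ℝ) (m : ℕ) (s : ι → ℕ) : Prop :=
  wordSum J (extendZero ω) (m + 1) s = r * wordSum J (extendZero ω) m s ∧
    wordSum J (extendZero ω) (m + 2) s = r * wordSum J (extendZero ω) (m + 1) s

/-- Equality in the log-concavity inequality makes `r • e_none - ω` isotropic, hence a kernel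
vector of the extension matrix. -/
theorem IsGeometricAt.wordSum_succ_add_single (hJ : IsPolymatroid J) (hω : ∀ i, 0 < ω i) {r : ℝ}
    {m : ℕ} {s : ι → ℕ} (h : IsGeometricAt J ω r m s) {b : ι → ℕ} (hb : b ∈ J)
    (hsb : ∑ i, s i + m + 2 ≤ ∑ i, b i) (i : ι) :
    wordSum J (extendZero ω) (m + 1) (s + Pi.single i 1) =
      r * wordSum J (extendZero ω) m (s + Pi.single i 1) := by
  by_cases hs : s ∈ J
  swap
  · have hsi : s + Pi.single i 1 ∉ J := fun h => hs (hJ.isLowerSet le_self_add h)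
    rw [wordSum_of_notMem hJ.isLowerSet _ _ hsi, wordSum_of_notMem hJ.isLowerSet _ _ hsi, mul_zero]
  set p := extendZero ω
  set M := extensionMatrix J p m s with hM
  set v : Option ι → ℝ := r • Pi.single none 1 - p
  have hMv (l : Option ι) :
      (M *ᵥ v) l = r * wordSum J p m (s + stepVec l) - wordSum J p (m + 1) (s + stepVec l) := by
    rw [mulVec_sub, mulVec_smul, mulVec_single_one, Pi.sub_apply, Pi.smul_apply, smul_eq_mul,
      extensionMatrix_mulVec_self]
    simp only [hM, extensionMatrix, col_apply, of_apply, stepVec_none, add_zero]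
  have hvp : v ⬝ᵥ M *ᵥ p = 0 := by
    rw [sub_dotProduct, smul_dotProduct, single_one_dotProduct, extensionMatrix_mulVec_self,
      dotProduct_extensionMatrix_mulVec_self, stepVec_none, add_zero, h.2, smul_eq_mul, sub_self]
  have hvv : v ⬝ᵥ M *ᵥ v = 0 := by
    rw [sub_dotProduct, dotProduct_mulVec_comm_of_isSymm (isSymm_extensionMatrix J p m s) p, hvp,
      smul_dotProduct, single_one_dotProduct, hMv, stepVec_none, add_zero, h.1, sub_self, smul_zero,
      sub_zero]
  have hp_pos : 0 < p ⬝ᵥ M *ᵥ p :=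
    dotProduct_extensionMatrix_mulVec_self J p m s ▸ wordSum_extendZero_pos hJ hω hs hb hsb
  have h_hyp : IsHyperbolicAt M p :=
    isHyperbolicAt_extensionMatrix hJ (extendZero_nonneg fun i => (hω i).le) m s
  have h_ker := congrFun (h_hyp.mulVec_eq_zero_of_isotropic (isSymm_extensionMatrix J p m s)
    hp_pos hvp hvv) (some i)
  rw [hMv, stepVec_some] at h_ker
  exact (sub_eq_zero.1 h_ker).symm

theorem IsGeometricAt.add_single (hJ : IsPolymatroid J) (hω : ∀ i, 0 < ω i) {r : ℝ}
    {m : ℕ} {s : ι → ℕ} (h : IsGeometricAt J ω r (m + 1) s) {b : ι → ℕ} (hb : b ∈ J)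
    (hsb : ∑ i, s i + m + 3 ≤ ∑ i, b i) (i : ι) : IsGeometricAt J ω r m (s + Pi.single i 1) := by
  set W := wordSum J (extendZero ω)
  have hω0 (i : ι) : 0 ≤ ω i := (hω i).le
  have h_top (j : ι) : W (m + 2) (s + Pi.single j 1) = r * W (m + 1) (s + Pi.single j 1) :=
    h.wordSum_succ_add_single hJ hω hb (by omega) j
  have h_le (j : ι) : r * W m (s + Pi.single j 1) ≤ W (m + 1) (s + Pi.single j 1) := by
    by_cases hj : s + Pi.single j 1 ∈ J
    · have h_pos : 0 < W (m + 1) (s + Pi.single j 1) :=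
        wordSum_extendZero_pos hJ hω hj hb (by rw [sum_add_single]; omega)
      have h_logConcave : W m (s + Pi.single j 1) * W (m + 2) (s + Pi.single j 1) ≤
          W (m + 1) (s + Pi.single j 1) ^ 2 :=
        wordSum_mul_wordSum_le_sq hJ (extendZero_nonneg hω0) m _
      rw [h_top] at h_logConcave
      exact le_of_mul_le_mul_right (by linarith) h_pos
    · have h_zero (q : ℕ) : W q (s + Pi.single j 1) = 0 := wordSum_of_notMem hJ.isLowerSet _ q hj
      rw [h_zero, h_zero, mul_zero]
  have h_sum : ∑ j, ω j * (r * W m (s + Pi.single j 1)) =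
      ∑ j, ω j * W (m + 1) (s + Pi.single j 1) :=
    calc ∑ j, ω j * (r * W m (s + Pi.single j 1)) = r * W (m + 1) s := by
          simp only [W, wordSum_extendZero_succ J ω m s, Finset.mul_sum, mul_left_comm r]
      _ = ∑ j, ω j * W (m + 1) (s + Pi.single j 1) :=
          h.1.symm.trans (wordSum_extendZero_succ J ω (m + 1) s)
  have h_eq := (Finset.sum_eq_sum_iff_of_le fun j _ =>
    mul_le_mul_of_nonneg_left (h_le j) (hω0 j)).1 h_sum i (Finset.mem_univ i)
  exact ⟨(mul_left_cancel₀ (hω i).ne' h_eq).symm, h_top i⟩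

theorem IsGeometricAt.of_sum_add_eq (hJ : IsPolymatroid J) (hω : ∀ i, 0 < ω i) {r : ℝ} {N : ℕ}
    (h : IsGeometricAt J ω r N 0) {b : ι → ℕ} (hb : b ∈ J) (hNb : N + 2 ≤ ∑ i, b i) {m : ℕ}
    {s : ι → ℕ} (hms : ∑ i, s i + m = N) : IsGeometricAt J ω r m s := by
  induction s using induction_add_single generalizing m with
  | zero =>
    obtain rfl : m = N := by simpa using hms
    exact h
  | add_single s i ih =>
    rw [sum_add_single] at hms
    exact (ih (m := m + 1) (by omega)).add_single hJ hω hb (by omega) i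

/-- The elements that can be adjoined to `s`, the paper's `Cnt(s)`. -/
def continuations (J : Set (ι → ℕ)) (s : ι → ℕ) : Finset ι := {i | s + Pi.single i 1 ∈ J}

theorem mem_continuations {s : ι → ℕ} {i : ι} : i ∈ continuations J s ↔ s + Pi.single i 1 ∈ J := by
  simp [continuations]

theorem continuations_add_subset (hJ : IsLowerSet J) (s t : ι → ℕ) :
    continuations J (s + t) ⊆ continuations J s := fun _ hi =>
  mem_continuations.2 (hJ (add_le_add_left le_self_add _) (mem_continuations.1 hi))

theorem wordSum_extendZero_one (J : Set (ι → ℕ)) (ω : ι → ℝ) (s : ι → ℕ) :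
    wordSum J (extendZero ω) 1 s = ∑ i ∈ continuations J s, ω i := by
  simp [wordSum_extendZero_succ, wordSum_zero, continuations, Finset.sum_filter]

theorem sum_continuations_eq_of_two_levels (hJ : IsPolymatroid J) (hω : ∀ i, 0 < ω i) {s b : ι → ℕ}
    (hs : s ∈ J) (hb : b ∈ J) (hsb : ∑ i, s i + 2 ≤ ∑ i, b i) {c : ℝ}
    (h : ∀ t ∈ J, ∑ i, t i = ∑ i, s i + 1 ∨ ∑ i, t i = ∑ i, s i + 2 →
      ∑ i ∈ continuations J t, ω i = c) : ∑ i ∈ continuations J s, ω i = c := by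
  have h_one {t : ι → ℕ} {i : ι} (ht : t ∈ J) (hti : t = s + Pi.single i 1) :
      ∑ i ∈ continuations J t, ω i = c := h t ht (.inl (by rw [hti, sum_add_single]))
  obtain ⟨i, -, hi⟩ := hJ.exchange hs hb (by omega)
  obtain ⟨j, -, hij⟩ := hJ.exchange hi hb (by rw [sum_add_single]; omega)
  have hji : s + Pi.single j 1 + Pi.single i 1 ∈ J := add_right_comm s _ _ ▸ hij
  have hj : s + Pi.single j 1 ∈ J := hJ.isLowerSet le_self_add hji
  have h_two : ∑ i ∈ continuations J (s + Pi.single i 1 + Pi.single j 1), ω i = c :=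
    h _ hij (.inr (by simp only [sum_add_single]))
  have h_eq : continuations J (s + Pi.single i 1) = continuations J (s + Pi.single j 1) :=
    calc continuations J (s + Pi.single i 1)
        = continuations J (s + Pi.single i 1 + Pi.single j 1) :=
          (eq_of_subset_of_sum_eq hω (continuations_add_subset hJ.isLowerSet _ _)
            (h_two.trans (h_one hi rfl).symm)).symm
      _ = continuations J (s + Pi.single j 1) := by
          rw [add_right_comm] at h_two ⊢
          exact eq_of_subset_of_sum_eq hω (continuations_add_subset hJ.isLowerSet _ _)
            (h_two.trans (h_one hj rfl).symm)
  have h_sub : continuations J s ⊆ continuations J (s + Pi.single i 1) := by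
    intro l hl
    obtain ⟨t, ht_lt, ht⟩ := hJ.exchange (mem_continuations.1 hl) hij
      (by simp only [sum_add_single]; omega)
    have ht_mem : t = i ∨ t = j := by
      by_contra! hne
      simp [Pi.single_eq_of_ne hne.1, Pi.single_eq_of_ne hne.2] at ht_lt
    rcases ht_mem with rfl | rfl
    · rwa [mem_continuations, add_right_comm]
    · rwa [h_eq, mem_continuations, add_right_comm]
  rw [h_sub.antisymm (continuations_add_subset hJ.isLowerSet _ _), h_one hi rfl]

theorem sum_continuations_eq_of_le (hJ : IsPolymatroid J) (hω : ∀ i, 0 < ω i) {b : ι → ℕ}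
    (hb : b ∈ J) {N : ℕ} (hNb : N + 1 ≤ ∑ i, b i) {c : ℝ}
    (h : ∀ t ∈ J, ∑ i, t i = N ∨ ∑ i, t i = N + 1 → ∑ i ∈ continuations J t, ω i = c) :
    ∀ t ∈ J, ∑ i, t i ≤ N + 1 → ∑ i ∈ continuations J t, ω i = c := by
  induction N with
  | zero => exact fun t ht htN => h t ht (by omega)
  | succ N ih =>
    have h_low (t : ι → ℕ) (ht : t ∈ J) (htN : ∑ i, t i = N) :
        ∑ i ∈ continuations J t, ω i = c :=
      sum_continuations_eq_of_two_levels hJ hω ht hb (by omega) fun u hu hut => h u hu (by omega)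
    have h_mid := ih (by omega) fun t ht htN => htN.elim (h_low t ht) fun h' => h t ht (.inl h')
    intro t ht htN
    rcases Nat.of_le_succ htN with h' | h'
    · exact h_mid t ht h'
    · exact h t ht (.inr h')

theorem forall_mem_of_sum_continuations_eq (h_nondeg : ∀ i, Pi.single i 1 ∈ J) (h0 : 0 ∈ J)
    (hω : ∀ i, 0 < ω i) {N : ℕ} {c : ℝ}
    (h : ∀ t ∈ J, ∑ i, t i ≤ N → ∑ i ∈ continuations J t, ω i = c) (a : ι → ℕ)
    (ha : ∑ i, a i ≤ N + 1) : a ∈ J := by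
  have h_univ : continuations J 0 = Finset.univ :=
    Finset.eq_univ_of_forall fun i => mem_continuations.2 (by rw [zero_add]; exact h_nondeg i)
  induction a using induction_add_single with
  | zero => exact h0
  | add_single a i ih =>
    rw [sum_add_single] at ha
    have ha_mem := ih (by omega)
    have h_full : continuations J a = Finset.univ :=
      eq_of_subset_of_sum_eq hω (Finset.subset_univ _) <| by
        rw [h a ha_mem (by omega), ← h_univ, h 0 h0 (by simp)]
    exact mem_continuations.1 (h_full ▸ Finset.mem_univ i)

theorem IsGeometricAt.sum_continuations_eq (hJ : IsPolymatroid J) (hω : ∀ i, 0 < ω i) {r : ℝ}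
    {N : ℕ} (h : IsGeometricAt J ω r N 0) {b : ι → ℕ} (hb : b ∈ J) (hNb : N + 2 ≤ ∑ i, b i)
    {s : ι → ℕ} (hs : s ∈ J) (hsN : ∑ i, s i = N ∨ ∑ i, s i = N + 1) :
    ∑ i ∈ continuations J s, ω i = r := by
  have h_geom {t : ι → ℕ} (ht : ∑ i, t i = N) : IsGeometricAt J ω r 0 t :=
    h.of_sum_add_eq hJ hω hb hNb ht
  have h_ratio {t : ι → ℕ} (ht : t ∈ J)
      (h1 : wordSum J (extendZero ω) 1 t = r * wordSum J (extendZero ω) 0 t) :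
      ∑ i ∈ continuations J t, ω i = r := by
    rw [← wordSum_extendZero_one, h1, wordSum_zero, if_pos ht, mul_one]
  refine h_ratio hs ?_
  rcases hsN with hsN | hsN
  · exact (h_geom hsN).1
  · cases s using induction_add_single with
    | zero => simp at hsN
    | add_single t i _ =>
      rw [sum_add_single] at hsN
      exact (h_geom (by omega)).wordSum_succ_add_single hJ hω hb (by omega) i

theorem wordSum_extendZero_sq_eq_iff (hJ : IsPolymatroid J) (h_nondeg : ∀ i, Pi.single i 1 ∈ J)
    (hω : ∀ i, 0 < ω i) {b : ι → ℕ} (hb : b ∈ J) {N : ℕ} (hNb : N + 2 ≤ ∑ i, b i) :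
    wordSum J (extendZero ω) (N + 1) 0 ^ 2 =
        wordSum J (extendZero ω) N 0 * wordSum J (extendZero ω) (N + 2) 0 ↔
      ∀ a : ι → ℕ, ∑ i, a i ≤ N + 2 → a ∈ J := by
  constructor
  · intro h_eq
    have h0 : 0 ∈ J := hJ.isLowerSet (zero_le : 0 ≤ b) hb
    have h_pos : 0 < wordSum J (extendZero ω) N 0 :=
      wordSum_extendZero_pos hJ hω h0 hb (by simp; omega)
    have h_geom : IsGeometricAt J ω
        (wordSum J (extendZero ω) (N + 1) 0 / wordSum J (extendZero ω) N 0) N 0 := by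
      constructor <;> field_simp
      linarith
    exact forall_mem_of_sum_continuations_eq h_nondeg h0 hω <|
      sum_continuations_eq_of_le hJ hω hb (by omega) fun t ht htN =>
        h_geom.sum_continuations_eq hJ hω hb hNb ht htN
  · intro h
    have h_pow {m : ℕ} (hm : m ≤ N + 2) : wordSum J (extendZero ω) m 0 = (∑ i, ω i) ^ m :=
      wordSum_extendZero_of_forall_mem ω fun a ha => h a (by simp at ha; omega)
    rw [h_pow (by omega), h_pow (by omega), h_pow le_rfl]
    ring

end Equality

section WeightedCount

variable {ι : Type*} [Fintype ι]

/-- The term `ω(a) / a!` of the weighted counts. -/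
def weightTerm (ω : ι → ℝ) (a : ι → ℕ) : ℝ := (∏ i, ω i ^ a i) / ∏ i, ((a i).factorial : ℝ)

variable [DecidableEq ι]

/-- The weighted count `J_ω(k) = Σ_{a ∈ J_k} ω(a) / a!`, a finite sum also for infinite `J`. -/
def weightedCount (J : Set (ι → ℕ)) (ω : ι → ℝ) (k : ℕ) : ℝ :=
  ∑ a ∈ Finset.piAntidiag Finset.univ k with a ∈ J, weightTerm ω a

theorem mem_piAntidiag_univ {a : ι → ℕ} {m : ℕ} :
    a ∈ Finset.piAntidiag Finset.univ m ↔ ∑ i, a i = m := by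
  simp

theorem add_one_mul_weightTerm_add_single (ω : ι → ℝ) (a : ι → ℕ) (i : ι) :
    (a i + 1 : ℝ) * weightTerm ω (a + Pi.single i 1) = ω i * weightTerm ω a := by
  have h_split (b : ι → ℕ) : weightTerm ω b = ω i ^ b i / (b i).factorial *
      ∏ j ∈ Finset.univ.erase i, ω j ^ b j / ((b j).factorial : ℝ) := by
    rw [weightTerm, ← Finset.prod_div_distrib,
      Finset.mul_prod_erase _ (fun j => ω j ^ b j / ((b j).factorial : ℝ)) (Finset.mem_univ i)]
  have h_rest : ∏ j ∈ Finset.univ.erase i, ω j ^ (a + Pi.single i 1 : ι → ℕ) j /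
        (((a + Pi.single i 1 : ι → ℕ) j).factorial : ℝ) =
      ∏ j ∈ Finset.univ.erase i, ω j ^ a j / ((a j).factorial : ℝ) := by
    refine Finset.prod_congr rfl fun j hj => ?_
    rw [Pi.add_apply, Pi.single_eq_of_ne (Finset.ne_of_mem_erase hj), add_zero]
  rw [h_split, h_split, h_rest, Pi.add_apply, Pi.single_eq_same, Nat.factorial_succ]
  push_cast
  field_simp
  ring

theorem sum_sum_piAntidiag_add_single (m : ℕ) (F : (ι → ℕ) → ℝ) :
    ∑ i, ∑ a ∈ Finset.piAntidiag Finset.univ m, (a i + 1 : ℝ) * F (a + Pi.single i 1) =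
      (m + 1) * ∑ b ∈ Finset.piAntidiag Finset.univ (m + 1), F b := by
  have h_shift (i : ι) :
      ∑ a ∈ Finset.piAntidiag Finset.univ m, (a i + 1 : ℝ) * F (a + Pi.single i 1) =
        ∑ b ∈ Finset.piAntidiag Finset.univ (m + 1), (b i : ℝ) * F b := by
    refine Finset.sum_of_injOn (· + Pi.single i 1) (add_left_injective _).injOn ?_ ?_ ?_
    · intro a ha
      rw [Finset.mem_coe, mem_piAntidiag_univ] at ha ⊢
      rw [sum_add_single, ha]
    · intro b hb hb_notMem
      by_cases hbi : b i = 0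
      · rw [hbi, Nat.cast_zero, zero_mul]
      have h_sub := sub_single_add_single hbi
      refine absurd ⟨b - Pi.single i 1, ?_, h_sub⟩ hb_notMem
      rw [mem_piAntidiag_univ, ← h_sub, sum_add_single] at hb
      exact mem_piAntidiag_univ.2 (Nat.succ.inj hb)
    · intro a _
      simp
  rw [Finset.sum_congr rfl fun i _ => h_shift i, Finset.sum_comm, Finset.mul_sum]
  refine Finset.sum_congr rfl fun b hb => ?_
  rw [← Finset.sum_mul, ← Nat.cast_sum, mem_piAntidiag_univ.1 hb, Nat.cast_succ]

variable {J : Set (ι → ℕ)} {ω : ι → ℝ}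

theorem wordSum_extendZero_eq_factorial_mul_sum (J : Set (ι → ℕ)) (ω : ι → ℝ) (m : ℕ) (s : ι → ℕ) :
    wordSum J (extendZero ω) m s =
      m.factorial * ∑ a ∈ Finset.piAntidiag Finset.univ m with s + a ∈ J, weightTerm ω a := by
  simp only [Finset.sum_filter]
  induction m generalizing s with
  | zero => simp [wordSum_zero, weightTerm]
  | succ m ih =>
    let F (b : ι → ℕ) : ℝ := if s + b ∈ J then weightTerm ω b else 0
    have h_term (i : ι) (a : ι → ℕ) :
        ω i * (if s + Pi.single i 1 + a ∈ J then weightTerm ω a else 0) =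
          (a i + 1) * F (a + Pi.single i 1) := by
      simp only [F, mul_ite, mul_zero, add_one_mul_weightTerm_add_single, add_assoc,
        add_comm (Pi.single i 1) a]
    calc wordSum J (extendZero ω) (m + 1) s
        = m.factorial * ∑ i, ∑ a ∈ Finset.piAntidiag Finset.univ m,
            (a i + 1) * F (a + Pi.single i 1) := by
          simp only [wordSum_extendZero_succ, ih, mul_left_comm (ω _), Finset.mul_sum, h_term]
      _ = (m + 1).factorial * ∑ b ∈ Finset.piAntidiag Finset.univ (m + 1), F b := by
          rw [sum_sum_piAntidiag_add_single, Nat.factorial_succ]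
          push_cast
          ring

theorem wordSum_extendZero_eq_factorial_mul_weightedCount (J : Set (ι → ℕ)) (ω : ι → ℝ) (m : ℕ) :
    wordSum J (extendZero ω) m 0 = m.factorial * weightedCount J ω m := by
  simp only [wordSum_extendZero_eq_factorial_mul_sum, zero_add, weightedCount]

theorem factorial_mul_sq_eq_iff (N : ℕ) (x y z : ℝ) :
    ((N + 1).factorial * y) ^ 2 = (N.factorial * x) * ((N + 2).factorial * z) ↔
      y ^ 2 = (1 + 1 / ((N + 1 : ℕ) : ℝ)) * x * z := by
  have : (N.factorial : ℝ) ≠ 0 := by positivity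
  rw [Nat.factorial_succ (N + 1), Nat.factorial_succ N]
  push_cast
  field_simp

theorem polymatroid_equality_t_one_general (hJ : IsPolymatroid J)
    (h_nondeg : ∀ i, Pi.single i 1 ∈ J) (hω : ∀ i, 0 < ω i) {k : ℕ} (hk : 1 ≤ k)
    (hk_rank : ∃ b ∈ J, k < ∑ i, b i) :
    weightedCount J ω k ^ 2 =
        (1 + 1 / (k : ℝ)) * weightedCount J ω (k - 1) * weightedCount J ω (k + 1) ↔
      ∀ a : ι → ℕ, ∑ i, a i ≤ k + 1 → a ∈ J := by
  obtain ⟨N, rfl⟩ := Nat.exists_eq_add_of_le' hk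
  obtain ⟨b, hb, hNb⟩ := hk_rank
  rw [Nat.add_sub_cancel, ← factorial_mul_sq_eq_iff]
  simp only [← wordSum_extendZero_eq_factorial_mul_weightedCount]
  exact wordSum_extendZero_sq_eq_iff hJ h_nondeg hω hb hNb

theorem sum_weightTerm_eq_weightedCount (ω : ι → ℝ) {S : Finset (ι → ℕ)} {k : ℕ}
    (hS : ∀ a, a ∈ S ↔ a ∈ J ∧ ∑ i, a i = k) : ∑ a ∈ S, weightTerm ω a = weightedCount J ω k := by
  refine Finset.sum_congr (Finset.ext fun a => ?_) fun _ _ => rfl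
  rw [hS, Finset.mem_filter, mem_piAntidiag_univ, and_comm]

end WeightedCount

theorem Jw_eq_weightedCount (J : Finset (Fin n → ℕ)) (ω : Fin n → ℝ) (k : ℕ) :
    Jw J ω k = weightedCount (J : Set (Fin n → ℕ)) ω k :=
  sum_weightTerm_eq_weightedCount ω fun _ => Finset.mem_filter

/-- **Equality for discrete polymatroids (the `t = 1` case).**  For a nondegenerate discrete
polymatroid, equality `J_ω(k)² = (1 + 1/k)·J_ω(k-1)·J_ω(k+1)` holds if and only if
`polygirth(D) > k+1`, i.e. every `a ∈ ℕ^n` with `|a| ≤ k+1` lies in `J`. -/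
theorem polymatroid_equality_t_one
    (J : Finset (Fin n → ℕ)) (h_ne : J.Nonempty)
    (h_hered : ∀ a ∈ J, ∀ b : Fin n → ℕ, b ≤ a → b ∈ J)
    (h_exch : ∀ a ∈ J, ∀ b ∈ J, (∑ i, a i) < (∑ i, b i) →
      ∃ i : Fin n, a i < b i ∧ a + Pi.single i 1 ∈ J)
    (h_nondeg : ∀ i : Fin n, Pi.single i 1 ∈ J)
    (ω : Fin n → ℝ) (hω : ∀ i, 0 < ω i)
    (k : ℕ) (hk1 : 1 ≤ k) (hk2 : k < polyRk J) :
    (Jw J ω k) ^ 2 =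
        ((1 : ℝ) + 1 / (k : ℝ)) * Jw J ω (k - 1) * Jw J ω (k + 1) ↔
      ∀ a : Fin n → ℕ, (∑ i, a i) ≤ k + 1 → a ∈ J := by
  have hJ : IsPolymatroid (J : Set (Fin n → ℕ)) :=
    ⟨h_ne, fun _ _ hba ha => h_hered _ ha _ hba, fun _ ha _ hb => h_exch _ ha _ hb⟩
  simp only [Jw_eq_weightedCount]
  exact polymatroid_equality_t_one_general hJ h_nondeg hω hk1 (Finset.lt_sup_iff.1 hk2)
end
end

section
/- Let P = (X, ≺) be a poset on |X| = n elements, let A_P = (X, L) be the corresponding poset antimatroid, and let ω : X → ℝ_{>0} be a positive weight function satisfying the cover monotonicity property (CM). Then for every integer 1 ≤ k < n: L_ω(k)² ≥ L_ω(k−1)·L_ω(k+1). -/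
open scoped Classical BigOperators

noncomputable section

variable {X : Type*} [Fintype X] [DecidableEq X] [PartialOrder X]

/-- A feasible word of the poset antimatroid of `(X, ≺)`: a simple word such that every
letter is preceded by all elements below it in the poset. -/
def FeasibleWord (α : List X) : Prop :=
  α.Nodup ∧ ∀ (l₁ l₂ : List X) (x : X), α = l₁ ++ x :: l₂ → ∀ y : X, y < x → y ∈ l₁

/-- All words of length `k` over the alphabet `X`. -/
def wordsLen (X : Type*) [Fintype X] [DecidableEq X] (k : ℕ) : Finset (List X) :=
  (Finset.univ : Finset (Fin k → X)).image List.ofFn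

/-- The weighted count `L_ω(k) = Σ_{α ∈ L_k} Π_{x ∈ α} ω(x)` over feasible words of
length `k`. -/
def Lw (ω : X → ℝ) (k : ℕ) : ℝ :=
  ∑ α ∈ (wordsLen X k).filter (fun α => FeasibleWord α), (α.map ω).prod

/-- The set `Cov(x)` of elements covering `x` in the poset. -/
def covers (x : X) : Finset X := Finset.univ.filter (fun y => x ⋖ y)

/-! The proof follows the combinatorial atlas method of Chan and Pak. To a lower set `I` and a level
`m` one attaches a symmetric nonnegative matrix whose form, evaluated at two suitable vectors, gives
the weights of the extensions of `I` of lengths `m`, `m + 1` and `m + 2`. If the form is hyperbolic,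
i.e. satisfies the reversed Cauchy–Schwarz inequality, log-concavity follows.

Hyperbolicity is proved by induction on `m`. At level `0` the matrix is a rank one matrix minus a
diagonal one, which is nonnegative exactly because of cover monotonicity. In the step, the matrix at
`(I, m + 1)` is dominated by the pullbacks of the matrices at `(I ∪ {x}, m)`. For the interpolations
`t C(m + 1) + (1 - t) C(m)`, `0 < t < 1`, whose Perron vector is explicit after normalization, this
forces every positive eigenvalue to be at least the Perron eigenvalue, which is simple; so there is
only one. Finally let `t → 1`. -/

section Hyperbolic

open Matrix

variable {ι : Type*} [Fintype ι] {M : Matrix ι ι ℝ}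

/-- A real matrix is *hyperbolic* if its bilinear form satisfies the reversed Cauchy–Schwarz
inequality. For symmetric matrices this says that at most one eigenvalue is positive. -/
def Hyperbolic (M : Matrix ι ι ℝ) : Prop :=
  ∀ v w : ι → ℝ, 0 < w ⬝ᵥ M *ᵥ w →
    (v ⬝ᵥ M *ᵥ v) * (w ⬝ᵥ M *ᵥ w) ≤ (v ⬝ᵥ M *ᵥ w) ^ 2

lemma dotProduct_mulVec_comm {R : Type*} [CommSemiring R] {A : Matrix ι ι R} (hA : A.IsSymm)
    (v w : ι → R) : v ⬝ᵥ A *ᵥ w = w ⬝ᵥ A *ᵥ v := by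
  simpa only [hA.eq] using dotProduct_transpose_mulVec A v w

lemma isClosed_setOf_hyperbolic : IsClosed {M : Matrix ι ι ℝ | Hyperbolic M} := by
  have continuous_form (v w : ι → ℝ) : Continuous fun M : Matrix ι ι ℝ => v ⬝ᵥ M *ᵥ w :=
    continuous_const.dotProduct (continuous_id.matrix_mulVec continuous_const)
  simp only [Hyperbolic, Set.ofPred_forall]
  refine isClosed_iInter fun v => isClosed_iInter fun w =>
    isClosed_imp (isOpen_lt continuous_const (continuous_form w w)) ?_
  exact isClosed_le ((continuous_form v v).mul (continuous_form w w)) ((continuous_form v w).pow 2)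

lemma hyperbolic_of_nonpos_of_orthogonal (hM : M.IsSymm) (ℓ : ι → ℝ)
    (hℓ : ∀ v, v ⬝ᵥ ℓ = 0 → v ⬝ᵥ M *ᵥ v ≤ 0) : Hyperbolic M := by
  intro v w hw
  set p := w ⬝ᵥ ℓ
  set q := v ⬝ᵥ ℓ
  have hp : p ≠ 0 := fun hp => (hℓ w hp).not_gt hw
  have horth : (p • v - q • w) ⬝ᵥ ℓ = 0 := by
    simp only [sub_dotProduct, smul_dotProduct, smul_eq_mul, p, q]
    ring
  have hform : (p • v - q • w) ⬝ᵥ M *ᵥ (p • v - q • w) =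
      p ^ 2 * (v ⬝ᵥ M *ᵥ v) - 2 * p * q * (v ⬝ᵥ M *ᵥ w) + q ^ 2 * (w ⬝ᵥ M *ᵥ w) := by
    simp only [sub_dotProduct, smul_dotProduct, mulVec_sub, mulVec_smul, dotProduct_sub,
      dotProduct_smul, smul_eq_mul, dotProduct_mulVec_comm hM w v]
    ring
  have hnonpos := mul_nonpos_of_nonpos_of_nonneg (hform ▸ hℓ _ horth) hw.le
  have hdisc : p ^ 2 * ((v ⬝ᵥ M *ᵥ v) * (w ⬝ᵥ M *ᵥ w) - (v ⬝ᵥ M *ᵥ w) ^ 2) ≤ 0 := by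
    linarith [sq_nonneg (q * (w ⬝ᵥ M *ᵥ w) - p * (v ⬝ᵥ M *ᵥ w))]
  exact sub_nonpos.mp (nonpos_of_mul_nonpos_right hdisc (by positivity))

lemma hyperbolic_of_offDiag_eq_mul {u : ι → ℝ} (hoff : ∀ i j, i ≠ j → M i j = u i * u j)
    (hdiag : ∀ i, M i i ≤ u i ^ 2) : Hyperbolic M := by
  have hM : M.IsSymm := by
    refine IsSymm.ext fun i j => ?_
    obtain rfl | hij := eq_or_ne i j
    · rfl
    · rw [hoff i j hij, hoff j i hij.symm, mul_comm]
  have hMv (v : ι → ℝ) (i : ι) : (M *ᵥ v) i = u i * (v ⬝ᵥ u) - (u i ^ 2 - M i i) * v i := by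
    have hentry (j : ι) : M i j * v j =
        u i * (v j * u j) - if i = j then (u i ^ 2 - M i i) * v i else 0 := by
      split_ifs with hij
      · subst hij; ring
      · rw [hoff i j hij]; ring
    simp only [mulVec, dotProduct, hentry, Finset.sum_sub_distrib, Finset.mul_sum,
      Finset.sum_ite_eq, Finset.mem_univ, if_true]
  refine hyperbolic_of_nonpos_of_orthogonal hM u fun v hv => Finset.sum_nonpos fun i _ => ?_
  rw [hMv, hv]
  linarith [mul_nonneg (sub_nonneg.mpr (hdiag i)) (sq_nonneg (v i))]

lemma row_eq_zero_of_mulVec_eq_zero (hM : ∀ i j, 0 ≤ M i j) {h : ι → ℝ} (hh : ∀ i, 0 < h i)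
    {i : ι} (hi : (M *ᵥ h) i = 0) : M i = 0 := by
  rw [mulVec, dotProduct,
    Finset.sum_eq_zero_iff_of_nonneg fun j _ => mul_nonneg (hM i j) (hh j).le] at hi
  exact funext fun j => (mul_eq_zero.mp (hi j (Finset.mem_univ j))).resolve_right (hh j).ne'

lemma mulVec_apply_nonneg (hM : ∀ i j, 0 ≤ M i j) {h : ι → ℝ} (hh : ∀ i, 0 ≤ h i) (i : ι) :
    0 ≤ (M *ᵥ h) i :=
  Finset.sum_nonneg fun j _ => mul_nonneg (hM i j) (hh j)

lemma Hyperbolic.dotProduct_mulVec_le (H : Hyperbolic M) (hM : ∀ i j, 0 ≤ M i j) {h : ι → ℝ}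
    (hh : ∀ i, 0 < h i) (v : ι → ℝ) :
    v ⬝ᵥ M *ᵥ v ≤ (v ⬝ᵥ M *ᵥ h) ^ 2 / (h ⬝ᵥ M *ᵥ h) := by
  have hterm (i : ι) : 0 ≤ h i * (M *ᵥ h) i :=
    mul_nonneg (hh i).le (mulVec_apply_nonneg hM (fun j => (hh j).le) i)
  obtain hzero | hpos := (Finset.sum_nonneg fun i _ => hterm i : 0 ≤ h ⬝ᵥ M *ᵥ h).eq_or_lt
  · have hrow (i : ι) : M i = 0 := by
      have hi := (Finset.sum_eq_zero_iff_of_nonneg fun i _ => hterm i).mp hzero.symm i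
        (Finset.mem_univ i)
      exact row_eq_zero_of_mulVec_eq_zero hM hh ((mul_eq_zero.mp hi).resolve_left (hh i).ne')
    have hMzero : M = 0 := funext hrow
    simp [hMzero]
  · exact (le_div_iff₀ hpos).mpr (H v h hpos)

lemma dotProduct_mulVec_nonpos_of_orthogonal_eigenvectors (hM : M.IsSymm) {v : ι → ℝ}
    (horth : ∀ (u : ι → ℝ) (l : ℝ), 0 < l → M *ᵥ u = l • u → v ⬝ᵥ u = 0) :
    v ⬝ᵥ M *ᵥ v ≤ 0 := by
  have hherm : M.IsHermitian := by rw [IsHermitian, conjTranspose_eq_transpose_of_trivial, hM.eq]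
  have hexpand := hherm.eigenvectorBasis.sum_inner_mul_inner
    (WithLp.toLp 2 v) (WithLp.toLp 2 (M *ᵥ v))
  simp only [EuclideanSpace.inner_eq_star_dotProduct, star_trivial] at hexpand
  rw [dotProduct_comm, ← hexpand]
  refine Finset.sum_nonpos fun k _ => ?_
  set u : ι → ℝ := (hherm.eigenvectorBasis k).ofLp
  set l := hherm.eigenvalues k
  have hu : M *ᵥ u = l • u := hherm.mulVec_eigenvectorBasis k
  have hMv : (M *ᵥ v) ⬝ᵥ u = l * (v ⬝ᵥ u) := by
    rw [dotProduct_comm, dotProduct_mulVec_comm hM, hu, dotProduct_smul, smul_eq_mul]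
  rw [hMv, dotProduct_comm u v]
  obtain hl | hl := le_or_gt l 0
  · linarith [mul_nonneg (neg_nonneg.mpr hl) (mul_self_nonneg (v ⬝ᵥ u))]
  · rw [horth u l hl hu, zero_mul]

lemma dotProduct_mulVec_nonpos_of_orthogonal_pencil (hM : M.IsSymm) {d : ι → ℝ}
    (hd : ∀ i, 0 ≤ d i) (hrow : ∀ i, d i = 0 → M i = 0) {v : ι → ℝ}
    (horth : ∀ (y : ι → ℝ) (l : ℝ), 0 < l → M *ᵥ y = l • (d * y) → v ⬝ᵥ (d * y) = 0) :
    v ⬝ᵥ M *ᵥ v ≤ 0 := by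
  -- Conjugating by `√d` turns the pencil into an ordinary eigenvalue problem; the weight `1` on the
  -- zero rows keeps the conjugation invertible.
  set s : ι → ℝ := fun i => if d i = 0 then 1 else √(d i)
  have hs (i : ι) : s i ≠ 0 := by
    simp only [s]
    split_ifs with hi
    · exact one_ne_zero
    · exact Real.sqrt_ne_zero'.mpr ((hd i).lt_of_ne' hi)
  have hss {i : ι} (hi : d i ≠ 0) : s i * s i = d i := by
    simp only [s, if_neg hi, Real.mul_self_sqrt (hd i)]
  set S : Matrix ι ι ℝ := of fun i j => M i j / (s i * s j) with hS_def
  have hS : S.IsSymm := IsSymm.ext fun i j => by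
    simp only [hS_def, of_apply, hM.apply i j, mul_comm (s j)]
  have hMS (x : ι → ℝ) (i : ι) : (M *ᵥ x) i = s i * (S *ᵥ (s * x)) i := by
    simp only [mulVec, dotProduct, Finset.mul_sum, hS_def, of_apply, Pi.mul_apply]
    refine Finset.sum_congr rfl fun j _ => ?_
    field_simp [hs i, hs j]
  have hform : v ⬝ᵥ M *ᵥ v = (s * v) ⬝ᵥ S *ᵥ (s * v) := by
    simp only [dotProduct, hMS, Pi.mul_apply]
    exact Finset.sum_congr rfl fun i _ => by ring
  rw [hform]
  refine dotProduct_mulVec_nonpos_of_orthogonal_eigenvectors hS fun u l hl hu => ?_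
  set y : ι → ℝ := u / s
  have hsy : s * y = u := funext fun i => mul_div_cancel₀ (u i) (hs i)
  have hMy (i : ι) : (M *ᵥ y) i = l * (s i * s i * y i) := by
    rw [hMS, hsy, hu, ← hsy]
    simp only [Pi.smul_apply, Pi.mul_apply, smul_eq_mul]
    ring
  have hdy (i : ι) : s i * s i * y i = d i * y i := by
    by_cases hi : d i = 0
    · have hzero : (M *ᵥ y) i = 0 := by simp only [mulVec, hrow i hi, zero_dotProduct]
      rw [hMy] at hzero
      rw [(mul_eq_zero.mp hzero).resolve_left hl.ne', hi, zero_mul]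
    · rw [hss hi]
  rw [← horth y l hl (funext fun i => by simp [hMy, hdy]), ← hsy]
  simp only [dotProduct, Pi.mul_apply, ← hdy]
  exact Finset.sum_congr rfl fun i _ => by ring

lemma sum_mul_sub_div_sq (hM : M.IsSymm) {h : ι → ℝ} (hh : ∀ i, h i ≠ 0) (v : ι → ℝ) :
    ∑ i, ∑ j, M i j * h i * h j * (v i / h i - v j / h j) ^ 2 =
      2 * (∑ i, (M *ᵥ h) i / h i * v i ^ 2 - v ⬝ᵥ M *ᵥ v) := by
  have hrows : ∑ i, (M *ᵥ h) i / h i * v i ^ 2 = ∑ i, ∑ j, M i j * h j / h i * v i ^ 2 := by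
    simp only [mulVec, dotProduct, Finset.sum_div, Finset.sum_mul]
  have hcols : ∑ i, (M *ᵥ h) i / h i * v i ^ 2 = ∑ i, ∑ j, M i j * h i / h j * v j ^ 2 := by
    rw [hrows, Finset.sum_comm]
    simp only [hM.apply]
  have hform : v ⬝ᵥ M *ᵥ v = ∑ i, ∑ j, v i * (M i j * v j) := by
    simp only [mulVec, dotProduct, Finset.mul_sum]
  rw [mul_sub, two_mul]
  nth_rewrite 1 [hrows]
  rw [hcols, hform]
  simp only [Finset.mul_sum, ← Finset.sum_add_distrib, ← Finset.sum_sub_distrib]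
  refine Finset.sum_congr rfl fun i _ => Finset.sum_congr rfl fun j _ => ?_
  field_simp [hh i, hh j]
  ring

lemma exists_forall_mul_eq_of_sum_le (hM : M.IsSymm) (hM₀ : ∀ i j, 0 ≤ M i j) {h : ι → ℝ}
    (hh : ∀ i, 0 < h i) {o : ι} (hconn : ∀ i ≠ o, M i o = 0 → M i = 0) {y : ι → ℝ}
    (hy : ∑ i, (M *ᵥ h) i / h i * y i ^ 2 ≤ y ⬝ᵥ M *ᵥ y) :
    ∃ c : ℝ, ∀ i, (M *ᵥ h) i / h i * y i = c * (M *ᵥ h) i := by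
  have hterm (i j : ι) : 0 ≤ M i j * h i * h j * (y i / h i - y j / h j) ^ 2 :=
    mul_nonneg (mul_nonneg (mul_nonneg (hM₀ i j) (hh i).le) (hh j).le) (sq_nonneg _)
  have hsum : ∑ i, ∑ j, M i j * h i * h j * (y i / h i - y j / h j) ^ 2 = 0 := by
    refine le_antisymm ?_ (Finset.sum_nonneg fun i _ => Finset.sum_nonneg fun j _ => hterm i j)
    rw [sum_mul_sub_div_sq hM fun i => (hh i).ne']
    linarith
  have hvanish (i j : ι) : M i j * h i * h j * (y i / h i - y j / h j) ^ 2 = 0 := by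
    have hi := (Finset.sum_eq_zero_iff_of_nonneg
      fun i _ => Finset.sum_nonneg fun j _ => hterm i j).mp hsum i (Finset.mem_univ i)
    exact (Finset.sum_eq_zero_iff_of_nonneg fun j _ => hterm i j).mp hi j (Finset.mem_univ j)
  refine ⟨y o / h o, fun i => ?_⟩
  suffices (M *ᵥ h) i = 0 ∨ y i / h i = y o / h o by
    obtain hi | hi := this
    · simp only [hi, zero_div, zero_mul, mul_zero]
    · rw [← hi]; ring
  obtain rfl | hio := eq_or_ne i o
  · exact .inr rfl
  by_cases hMio : M i o = 0
  · exact .inl (by simp only [mulVec, hconn i hio hMio, zero_dotProduct])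
  · right
    simpa [hMio, (hh i).ne', (hh o).ne', sub_eq_zero] using hvanish i o

-- With `D = diag (M h / h)`, the hypothesis `hpull` says that `N = D⁻¹ M`, which is self-adjoint
-- for `D` and fixes `h`, satisfies `N ≤ N²`. So a positive eigenvalue of `N` is at least `1`, hence
-- equal to `1` with eigenvector `h` by Perron–Frobenius. Rows with `(M h) i = 0` vanish, so the
-- convention `0 / 0 = 0` is the right one there.
theorem hyperbolic_of_pullback_inequality (hM : M.IsSymm) (hM₀ : ∀ i j, 0 ≤ M i j) {h : ι → ℝ}
    (hh : ∀ i, 0 < h i) {o : ι} (hconn : ∀ i ≠ o, M i o = 0 → M i = 0)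
    (hpull : ∀ v, v ⬝ᵥ M *ᵥ v ≤ ∑ i, h i * (M *ᵥ v) i ^ 2 / (M *ᵥ h) i) : Hyperbolic M := by
  set d : ι → ℝ := fun i => (M *ᵥ h) i / h i
  have hMh (i : ι) : (M *ᵥ h) i = d i * h i := (div_mul_cancel₀ _ (hh i).ne').symm
  have hd (i : ι) : 0 ≤ d i :=
    div_nonneg (mulVec_apply_nonneg hM₀ (fun j => (hh j).le) i) (hh i).le
  have hrow (i : ι) (hi : d i = 0) : M i = 0 :=
    row_eq_zero_of_mulVec_eq_zero hM₀ hh (by rw [hMh, hi, zero_mul])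
  refine hyperbolic_of_nonpos_of_orthogonal hM (M *ᵥ h) fun v hv =>
    dotProduct_mulVec_nonpos_of_orthogonal_pencil hM hd hrow fun y l hl hy => ?_
  have hform : y ⬝ᵥ M *ᵥ y = l * ∑ i, d i * y i ^ 2 := by
    simp only [hy, dotProduct, Pi.smul_apply, Pi.mul_apply, smul_eq_mul, Finset.mul_sum]
    exact Finset.sum_congr rfl fun i _ => by ring
  have hpulled : ∑ i, h i * (M *ᵥ y) i ^ 2 / (M *ᵥ h) i = l * (l * ∑ i, d i * y i ^ 2) := by
    simp only [hy, hMh, Pi.smul_apply, Pi.mul_apply, smul_eq_mul, Finset.mul_sum]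
    refine Finset.sum_congr rfl fun i _ => ?_
    by_cases hi : d i = 0
    · simp only [hi, zero_mul, mul_zero, div_zero]
    · field_simp [hi, (hh i).ne']
  have henergy : ∑ i, d i * y i ^ 2 ≤ y ⬝ᵥ M *ᵥ y := by
    have hy_pull := hpull y
    rw [hpulled, hform] at hy_pull
    exact hform ▸ le_of_mul_le_mul_left hy_pull hl
  obtain ⟨c, hc⟩ := exists_forall_mul_eq_of_sum_le hM hM₀ hh hconn henergy
  have hdy : d * y = c • (M *ᵥ h) := funext hc
  rw [hdy, dotProduct_smul, hv, smul_zero]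

end Hyperbolic

section MixVec

/-- The vector which, for `0 < t < 1`, is positive and takes the place of the Perron eigenvector
of the interpolation between two consecutive atlas matrices. -/
def mixVec {V : Type*} (t : ℝ) : Option V → ℝ
  | none => 1 - t
  | some _ => t

lemma mixVec_pos {V : Type*} {t : ℝ} (ht₀ : 0 < t) (ht₁ : t < 1) (i : Option V) :
    0 < mixVec t i := by
  cases i
  exacts [sub_pos.mpr ht₁, ht₀]

end MixVec

section Addable

variable {P : Type*} [PartialOrder P] {I : Finset P} {x y z : P}

/-- The letter `x` may follow a feasible word whose set of letters is `I`. -/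
def Addable (I : Finset P) (x : P) : Prop := x ∉ I ∧ ∀ y < x, y ∈ I

/-- The weight of appending `x` to a feasible word with set of letters `I`: it is `ω x` if the
resulting word is feasible and `0` otherwise. -/
def addWeight (ω : P → ℝ) (I : Finset P) (x : P) : ℝ := if Addable I x then ω x else 0

lemma addWeight_of_addable (ω : P → ℝ) (hx : Addable I x) : addWeight ω I x = ω x := if_pos hx

lemma addWeight_of_not_addable (ω : P → ℝ) (hx : ¬Addable I x) : addWeight ω I x = 0 := if_neg hx

lemma addWeight_of_mem (ω : P → ℝ) (hx : x ∈ I) : addWeight ω I x = 0 :=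
  addWeight_of_not_addable ω fun h => h.1 hx

lemma addWeight_nonneg {ω : P → ℝ} (hω : ∀ x, 0 ≤ ω x) (I : Finset P) (x : P) :
    0 ≤ addWeight ω I x := by
  unfold addWeight
  split_ifs
  exacts [hω x, le_rfl]

/-- The transfer map of the atlas from the child `I ∪ {x}` to `I`: after `x` has been appended,
a letter that was already addable to `I` stands for itself, while the letters that became addable
only because of `x` are identified with `x`. The element `none` marks stopping. -/
def redirect (I : Finset P) (x : P) : Option P → Option P
  | none => none
  | some z => if Addable I z then some z else some x

lemma redirect_none (I : Finset P) (x : P) : redirect I x none = none := rfl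

lemma redirect_of_addable (x : P) (hz : Addable I z) : redirect I x (some z) = some z := if_pos hz

lemma redirect_of_not_addable (x : P) (hz : ¬Addable I z) : redirect I x (some z) = some x :=
  if_neg hz

lemma redirect_eq_none_iff {i : Option P} : redirect I x i = none ↔ i = none := by
  rcases i with _ | z
  · simp only [redirect_none]
  · by_cases hz : Addable I z <;> simp [redirect, hz]

lemma redirect_eq_some_iff_of_ne (hxy : x ≠ y) {i : Option P} :
    redirect I x i = some y ↔ i = some y ∧ Addable I y := by
  rcases i with _ | z
  · simp [redirect_none]
  · by_cases hz : Addable I z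
    · simp only [redirect_of_addable x hz, iff_self_and, Option.some_inj]
      rintro rfl
      exact hz
    · simp only [redirect_of_not_addable x hz, Option.some_inj, hxy, false_iff]
      rintro ⟨rfl, hy⟩
      exact hz hy

lemma mixVec_comp_redirect (t : ℝ) (I : Finset P) (x : P) :
    mixVec t ∘ redirect I x = mixVec t := by
  funext i
  rcases i with _ | z
  · rfl
  · by_cases hz : Addable I z <;> simp [redirect, hz, mixVec]

variable [DecidableEq P]

lemma Addable.insert (hy : Addable I y) (hxy : x ≠ y) : Addable (insert x I) y :=
  ⟨by simp [hy.1, hxy.symm], fun z hz => Finset.mem_insert_of_mem (hy.2 z hz)⟩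

lemma Addable.of_insert_insert (hxy : x ≠ y) (hx : Addable (Insert.insert x I) z)
    (hy : Addable (Insert.insert y I) z) : Addable I z := by
  refine ⟨fun hz => hx.1 (Finset.mem_insert_of_mem hz), fun u hu => ?_⟩
  have hux := Finset.mem_insert.mp (hx.2 u hu)
  have huy := Finset.mem_insert.mp (hy.2 u hu)
  grind

lemma Addable.isLowerSet_insert (hx : Addable I x) (hI : IsLowerSet (I : Set P)) :
    IsLowerSet (↑(Insert.insert x I) : Set P) := by
  intro a b hba ha
  simp only [Finset.coe_insert, Set.mem_insert_iff, Finset.mem_coe] at ha ⊢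
  obtain rfl | ha := ha
  · exact hba.eq_or_lt.imp_right (hx.2 b)
  · exact .inr (hI hba ha)

lemma Addable.covBy (hI : IsLowerSet (I : Set P)) (hx : Addable I x) (hz : ¬Addable I z)
    (hxz : Addable (Insert.insert x I) z) : x ⋖ z := by
  have hzI : z ∉ I := fun h => hxz.1 (Finset.mem_insert_of_mem h)
  obtain ⟨y, hyz, hyI⟩ : ∃ y < z, y ∉ I := by
    by_contra! h
    exact hz ⟨hzI, h⟩
  obtain rfl := (Finset.mem_insert.mp (hxz.2 y hyz)).resolve_right hyI
  refine ⟨hyz, fun u hyu huz => ?_⟩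
  have huI := (Finset.mem_insert.mp (hxz.2 u huz)).resolve_left hyu.ne'
  exact hx.1 (hI hyu.le huI)

lemma addWeight_insert_of_addable (ω : P → ℝ) (hy : Addable I y) (hxy : x ≠ y) :
    addWeight ω (insert x I) y = addWeight ω I y := by
  rw [addWeight_of_addable ω hy, addWeight_of_addable ω (hy.insert hxy)]

lemma redirect_redirect_comm_or (hx : Addable I x) (hy : Addable I y) (hxy : x ≠ y) (hzx : z ≠ x)
    (hzy : z ≠ y) :
    redirect I x (redirect (insert x I) y (some z)) =
        redirect I y (redirect (insert y I) x (some z)) ∨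
      redirect I x (redirect (insert x I) y (some z)) = some y ∧
        redirect I y (redirect (insert y I) x (some z)) = some x := by
  by_cases hz : Addable I z
  · simp only [redirect_of_addable, hz, hz.insert hzx.symm, hz.insert hzy.symm, true_or]
  by_cases hxz : Addable (insert x I) z
  · have hyz : ¬Addable (insert y I) z := fun hyz => hz (hxz.of_insert_insert hxy hyz)
    simp only [redirect, hz, hxz, hyz, hx, if_true, if_false, true_or]
  · by_cases hyz : Addable (insert y I) z <;>
      simp only [redirect, hz, hxz, hyz, hx, hy, if_true, if_false, true_or, and_self, or_true]

end Addable

section Atlas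

open Matrix

variable {ω : X → ℝ} {m : ℕ} {I : Finset X} {x y : X}

/-- The total weight of the words of length `m` by which a feasible word with set of letters `I`
can be extended to a feasible word. -/
def extWeight (ω : X → ℝ) : ℕ → Finset X → ℝ
  | 0, _ => 1
  | m + 1, I => ∑ x, addWeight ω I x * extWeight ω m (insert x I)

/-- The row of index `none` of the atlas matrix: its entry at `none` is the weight of the
extensions of length `m`, its entry at `some x` that of the extensions of length `m + 1` which
start with `x`. -/
def headRow (ω : X → ℝ) (m : ℕ) (I : Finset X) : Option X → ℝ
  | none => extWeight ω m I
  | some x => addWeight ω I x * extWeight ω m (insert x I)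

/-- The matrix attached to the vertex `(I, m)` of the combinatorial atlas of Chan and Pak. Its row
`some x` is the head row of the child `insert x I`, pushed forward along the transfer map. -/
def atlasMatrix (ω : X → ℝ) (m : ℕ) (I : Finset X) : Matrix (Option X) (Option X) ℝ
  | none, j => headRow ω m I j
  | some x, j => addWeight ω I x * ∑ i with redirect I x i = j, headRow ω m (insert x I) i

lemma extWeight_nonneg (hω : ∀ x, 0 ≤ ω x) (m : ℕ) (I : Finset X) : 0 ≤ extWeight ω m I := by
  induction m generalizing I with
  | zero => exact zero_le_one
  | succ m ih => exact Finset.sum_nonneg fun x _ => mul_nonneg (addWeight_nonneg hω I x) (ih _)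

lemma headRow_nonneg (hω : ∀ x, 0 ≤ ω x) (m : ℕ) (I : Finset X) (i : Option X) :
    0 ≤ headRow ω m I i := by
  cases i with
  | none => exact extWeight_nonneg hω m I
  | some x => exact mul_nonneg (addWeight_nonneg hω I x) (extWeight_nonneg hω m _)

lemma atlasMatrix_nonneg (hω : ∀ x, 0 ≤ ω x) (m : ℕ) (I : Finset X) (i j : Option X) :
    0 ≤ atlasMatrix ω m I i j := by
  cases i with
  | none => exact headRow_nonneg hω m I j
  | some x =>
    exact mul_nonneg (addWeight_nonneg hω I x)
      (Finset.sum_nonneg fun i _ => headRow_nonneg hω m _ i)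

lemma headRow_some_eq_zero (hω : ∀ x, 0 ≤ ω x) (h : extWeight ω (m + 1) I = 0) (x : X) :
    headRow ω m I (some x) = 0 :=
  (Finset.sum_eq_zero_iff_of_nonneg fun x _ => headRow_nonneg hω m I (some x)).mp h x
    (Finset.mem_univ x)

lemma extWeight_succ_eq_zero (hω : ∀ x, 0 ≤ ω x) (h : extWeight ω m I = 0) :
    extWeight ω (m + 1) I = 0 := by
  induction m generalizing I with
  | zero => exact absurd h one_ne_zero
  | succ m ih =>
    refine Finset.sum_eq_zero fun x _ => ?_
    obtain hx | hx := mul_eq_zero.mp (headRow_some_eq_zero hω h x)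
    · rw [hx, zero_mul]
    · rw [ih hx, mul_zero]

lemma headRow_eq_zero (hω : ∀ x, 0 ≤ ω x) (h : extWeight ω m I = 0) : headRow ω m I = 0 := by
  funext i
  cases i with
  | none => exact h
  | some x => exact headRow_some_eq_zero hω (extWeight_succ_eq_zero hω h) x

lemma atlasMatrix_some_none (ω : X → ℝ) (m : ℕ) (I : Finset X) (x : X) :
    atlasMatrix ω m I (some x) none = addWeight ω I x * extWeight ω m (insert x I) := by
  have hfiber : ({i | redirect I x i = none} : Finset (Option X)) = {none} := by
    ext i
    simp only [Finset.mem_filter_univ, redirect_eq_none_iff, Finset.mem_singleton]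
  simp only [atlasMatrix, hfiber, Finset.sum_singleton, headRow]

lemma atlasMatrix_some_some_of_ne (ω : X → ℝ) (m : ℕ) (I : Finset X) (hxy : x ≠ y) :
    atlasMatrix ω m I (some x) (some y) =
      addWeight ω I x * (addWeight ω I y * extWeight ω m (insert y (insert x I))) := by
  by_cases hy : Addable I y
  · simp only [atlasMatrix, redirect_eq_some_iff_of_ne hxy, hy, and_true, Finset.filter_eq',
      Finset.mem_univ, if_true, Finset.sum_singleton, headRow,
      addWeight_insert_of_addable ω hy hxy]
  · simp only [atlasMatrix, redirect_eq_some_iff_of_ne hxy, hy, and_false, Finset.filter_false,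
      Finset.sum_empty, addWeight_of_not_addable ω hy, zero_mul]

lemma atlasMatrix_some_some_self (ω : X → ℝ) (m : ℕ) (I : Finset X) (x : X) :
    atlasMatrix ω m I (some x) (some x) =
      addWeight ω I x * ∑ z with ¬Addable I z, headRow ω m (insert x I) (some z) := by
  have hterm (z : X) : (if redirect I x (some z) = some x then headRow ω m (insert x I) (some z)
      else 0) = if ¬Addable I z then headRow ω m (insert x I) (some z) else 0 := by
    by_cases hz : Addable I z
    · obtain rfl | hzx := eq_or_ne z x
      · simp [headRow, addWeight_of_mem ω (Finset.mem_insert_self z I)]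
      · simp [redirect_of_addable x hz, hz, hzx]
    · simp [redirect_of_not_addable x hz, hz]
  simp only [atlasMatrix, Finset.sum_filter, Fintype.sum_option, hterm, redirect_none,
    reduceCtorEq, if_false, zero_add]

lemma atlasMatrix_isSymm (ω : X → ℝ) (m : ℕ) (I : Finset X) : (atlasMatrix ω m I).IsSymm := by
  refine IsSymm.ext fun i j => ?_
  rcases i with _ | x <;> rcases j with _ | y
  · rfl
  · exact atlasMatrix_some_none ω m I y
  · exact (atlasMatrix_some_none ω m I x).symm
  · obtain rfl | hxy := eq_or_ne x y
    · rfl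
    · rw [atlasMatrix_some_some_of_ne ω m I hxy, atlasMatrix_some_some_of_ne ω m I hxy.symm,
        Finset.insert_comm]
      ring

lemma atlasMatrix_mulVec_none (ω : X → ℝ) (m : ℕ) (I : Finset X) (v : Option X → ℝ) :
    (atlasMatrix ω m I *ᵥ v) none = headRow ω m I ⬝ᵥ v :=
  rfl

lemma atlasMatrix_mulVec_some (ω : X → ℝ) (m : ℕ) (I : Finset X) (v : Option X → ℝ) (x : X) :
    (atlasMatrix ω m I *ᵥ v) (some x) =
      addWeight ω I x * (headRow ω m (insert x I) ⬝ᵥ (v ∘ redirect I x)) := by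
  simp only [mulVec, dotProduct, atlasMatrix, mul_assoc, ← Finset.mul_sum, Finset.sum_mul,
    Function.comp_apply]
  rw [← Finset.sum_fiberwise _ (redirect I x) fun i =>
    headRow ω m (insert x I) i * v (redirect I x i)]
  congr 1
  refine Finset.sum_congr rfl fun j _ => Finset.sum_congr rfl fun i hi => ?_
  rw [(Finset.mem_filter.mp hi).2]

lemma headRow_dotProduct_mixVec (ω : X → ℝ) (m : ℕ) (I : Finset X) (t : ℝ) :
    headRow ω m I ⬝ᵥ mixVec t = t * extWeight ω (m + 1) I + (1 - t) * extWeight ω m I := by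
  simp only [dotProduct, Fintype.sum_option, headRow, mixVec, extWeight, ← Finset.sum_mul]
  ring

lemma atlasMatrix_mulVec_mixVec (ω : X → ℝ) (m : ℕ) (I : Finset X) (t : ℝ) :
    atlasMatrix ω m I *ᵥ mixVec t = t • headRow ω (m + 1) I + (1 - t) • headRow ω m I := by
  funext i
  cases i with
  | none => exact headRow_dotProduct_mixVec ω m I t
  | some x =>
    rw [atlasMatrix_mulVec_some, mixVec_comp_redirect, headRow_dotProduct_mixVec]
    simp only [headRow, Pi.add_apply, Pi.smul_apply, smul_eq_mul]
    ring

lemma headRow_succ_dotProduct (ω : X → ℝ) (m : ℕ) (I : Finset X) (v : Option X → ℝ) :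
    headRow ω (m + 1) I ⬝ᵥ v =
      ∑ x, addWeight ω I x * (headRow ω m (insert x I) ⬝ᵥ (v ∘ redirect I x)) := by
  calc headRow ω (m + 1) I ⬝ᵥ v = v ⬝ᵥ atlasMatrix ω m I *ᵥ mixVec 1 := by
        rw [atlasMatrix_mulVec_mixVec, dotProduct_comm]
        simp
    _ = mixVec 1 ⬝ᵥ atlasMatrix ω m I *ᵥ v :=
        dotProduct_mulVec_comm (atlasMatrix_isSymm ω m I) _ _
    _ = _ := by
        rw [dotProduct, Fintype.sum_option]
        simp [mixVec, atlasMatrix_mulVec_some]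

end Atlas

section Pullback

open Matrix

variable {ω : X → ℝ} {I : Finset X} {x y : X}

-- The two double transfers differ only on letters made addable by neither `x` nor `y` alone; these
-- are sent to `y` and to `x`, so that each of them contributes a square.
lemma mul_headRow_sub_nonneg (hω : ∀ x, 0 ≤ ω x) (m : ℕ) (v : Option X → ℝ) (hx : Addable I x)
    (hy : Addable I y) (hxy : x ≠ y) :
    0 ≤ (v (some y) - v (some x)) *
      (headRow ω m (insert y (insert x I)) ⬝ᵥ (v ∘ redirect I x ∘ redirect (insert x I) y) -
        headRow ω m (insert x (insert y I)) ⬝ᵥ (v ∘ redirect I y ∘ redirect (insert y I) x)) := by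
  rw [Finset.insert_comm x y I, ← dotProduct_sub, dotProduct, Finset.mul_sum]
  refine Finset.sum_nonneg fun i _ => ?_
  rw [mul_left_comm]
  obtain _ | z := i
  · simp [redirect_none]
  by_cases hz : z ∈ insert y (insert x I)
  · simp only [headRow, addWeight_of_mem ω hz, zero_mul, le_rfl]
  · simp only [Finset.mem_insert, not_or] at hz
    refine mul_nonneg (headRow_nonneg hω m _ _) ?_
    simp only [Pi.sub_apply, Function.comp_apply]
    obtain heq | ⟨hfst, hsnd⟩ := redirect_redirect_comm_or hx hy hxy hz.2.1 hz.1
    · rw [heq, sub_self, mul_zero]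
    · rw [hfst, hsnd]
      exact mul_self_nonneg _

lemma sum_sum_nonneg_of_add_swap_nonneg {ι : Type*} [Fintype ι] {K : ι → ι → ℝ}
    (hK : ∀ i j, 0 ≤ K i j + K j i) : 0 ≤ ∑ i, ∑ j, K i j := by
  have hdouble : 0 ≤ ∑ i, ∑ j, (K i j + K j i) :=
    Finset.sum_nonneg fun i _ => Finset.sum_nonneg fun j _ => hK i j
  simp only [Finset.sum_add_distrib] at hdouble
  rw [Finset.sum_comm (f := fun i j => K j i)] at hdouble
  linarith

lemma dotProduct_atlasMatrix_mulVec (ω : X → ℝ) (m : ℕ) (I : Finset X) (v : Option X → ℝ) :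
    v ⬝ᵥ atlasMatrix ω m I *ᵥ v = v none * (headRow ω m I ⬝ᵥ v) +
      ∑ x, v (some x) * (addWeight ω I x * (headRow ω m (insert x I) ⬝ᵥ (v ∘ redirect I x))) := by
  rw [dotProduct, Fintype.sum_option]
  simp only [atlasMatrix_mulVec_none, atlasMatrix_mulVec_some]

lemma sum_pullback_sub_eq (ω : X → ℝ) (m : ℕ) (I : Finset X) (v : Option X → ℝ) :
    ∑ x, addWeight ω I x *
          ((v ∘ redirect I x) ⬝ᵥ atlasMatrix ω m (insert x I) *ᵥ (v ∘ redirect I x)) -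
        v ⬝ᵥ atlasMatrix ω (m + 1) I *ᵥ v =
      ∑ x, ∑ y, addWeight ω I x * addWeight ω (insert x I) y *
        ((v (redirect I x (some y)) - v (some x)) * (headRow ω m (insert y (insert x I)) ⬝ᵥ
          (v ∘ redirect I x ∘ redirect (insert x I) y))) := by
  rw [dotProduct_atlasMatrix_mulVec ω (m + 1), headRow_succ_dotProduct ω m I v, Finset.mul_sum,
    ← Finset.sum_add_distrib, ← Finset.sum_sub_distrib]
  refine Finset.sum_congr rfl fun x _ => ?_
  rw [dotProduct_atlasMatrix_mulVec, headRow_succ_dotProduct ω m (insert x I)]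
  simp only [Function.comp_apply, redirect_none, Function.comp_assoc, mul_add, Finset.mul_sum]
  rw [add_sub_add_comm, mul_left_comm, sub_self, zero_add, ← Finset.sum_sub_distrib]
  exact Finset.sum_congr rfl fun y _ => by ring

lemma dotProduct_atlasMatrix_succ_le (hω : ∀ x, 0 ≤ ω x) (m : ℕ) (I : Finset X)
    (v : Option X → ℝ) :
    v ⬝ᵥ atlasMatrix ω (m + 1) I *ᵥ v ≤
      ∑ x, addWeight ω I x *
        ((v ∘ redirect I x) ⬝ᵥ atlasMatrix ω m (insert x I) *ᵥ (v ∘ redirect I x)) := by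
  rw [← sub_nonneg, sum_pullback_sub_eq]
  refine sum_sum_nonneg_of_add_swap_nonneg fun x y => ?_
  -- If `x` is not addable, the transfer map sends it to `y`, so the factor in the `(y, x)` term is
  -- `v (some y) - v (some y)` even where its weight does not vanish.
  by_cases hx : Addable I x; swap
  · simp [addWeight_of_not_addable ω hx, redirect_of_not_addable y hx]
  by_cases hy : Addable I y; swap
  · simp [addWeight_of_not_addable ω hy, redirect_of_not_addable x hy]
  obtain rfl | hxy := eq_or_ne x y
  · simp [addWeight_of_mem ω (Finset.mem_insert_self x I)]
  rw [redirect_of_addable x hy, redirect_of_addable y hx, addWeight_insert_of_addable ω hy hxy,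
    addWeight_insert_of_addable ω hx hxy.symm]
  linarith [mul_nonneg (mul_nonneg (addWeight_nonneg hω I x) (addWeight_nonneg hω I y))
    (mul_headRow_sub_nonneg hω m v hx hy hxy)]

end Pullback

section Hyperbolicity

open Matrix Filter
open scoped Topology

variable {ω : X → ℝ} {m : ℕ} {I : Finset X} {x : X} {t : ℝ}

lemma sum_addWeight_insert_le (hω : ∀ x, 0 ≤ ω x) (hCM : ∀ x, ∑ y ∈ covers x, ω y ≤ ω x)
    (hI : IsLowerSet (I : Set X)) (hx : Addable I x) :
    ∑ z with ¬Addable I z, addWeight ω (insert x I) z ≤ ω x := by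
  refine le_trans ?_ (hCM x)
  rw [covers, Finset.sum_filter, Finset.sum_filter]
  refine Finset.sum_le_sum fun z _ => ?_
  by_cases hz : ¬Addable I z ∧ Addable (insert x I) z
  · rw [if_pos hz.1, addWeight_of_addable ω hz.2, if_pos (hx.covBy hI hz.1 hz.2)]
  · have hzero : (if ¬Addable I z then addWeight ω (insert x I) z else 0) = 0 :=
      ite_eq_right_iff.mpr fun h => addWeight_of_not_addable ω (not_and.mp hz h)
    rw [hzero]
    split_ifs
    exacts [hω z, le_rfl]

lemma hyperbolic_atlasMatrix_zero (hω : ∀ x, 0 ≤ ω x) (hCM : ∀ x, ∑ y ∈ covers x, ω y ≤ ω x)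
    (hI : IsLowerSet (I : Set X)) : Hyperbolic (atlasMatrix ω 0 I) := by
  refine hyperbolic_of_offDiag_eq_mul (u := headRow ω 0 I) (fun i j hij => ?_) fun i => ?_
  · rcases i with _ | x <;> rcases j with _ | y
    · exact absurd rfl hij
    · simp only [atlasMatrix, headRow, extWeight, one_mul]
    · simp only [atlasMatrix_some_none, headRow, extWeight, mul_one]
    · have hxy : x ≠ y := fun h => hij (congrArg some h)
      simp only [atlasMatrix_some_some_of_ne ω 0 I hxy, headRow, extWeight, mul_one]
  · rcases i with _ | x
    · simp only [atlasMatrix, headRow, extWeight, one_pow, le_rfl]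
    · simp only [atlasMatrix_some_some_self, headRow, extWeight, mul_one, sq]
      by_cases hx : Addable I x
      · rw [addWeight_of_addable ω hx]
        exact mul_le_mul_of_nonneg_left (sum_addWeight_insert_le hω hCM hI hx) (hω x)
      · simp only [addWeight_of_not_addable ω hx, zero_mul, le_rfl]

/-- The interpolation between the atlas matrices of the levels `m` and `m + 1`. Its product with a
vector is expressed by the forms of level `m` alone, paired with `mixVec t`, which is what lets the
induction on the level run. -/
def atlasInterp (ω : X → ℝ) (m : ℕ) (I : Finset X) (t : ℝ) : Matrix (Option X) (Option X) ℝ :=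
  t • atlasMatrix ω (m + 1) I + (1 - t) • atlasMatrix ω m I

lemma atlasInterp_isSymm (ω : X → ℝ) (m : ℕ) (I : Finset X) (t : ℝ) :
    (atlasInterp ω m I t).IsSymm :=
  ((atlasMatrix_isSymm ω (m + 1) I).smul t).add ((atlasMatrix_isSymm ω m I).smul (1 - t))

lemma atlasInterp_nonneg (hω : ∀ x, 0 ≤ ω x) (m : ℕ) (I : Finset X) (ht₀ : 0 ≤ t) (ht₁ : t ≤ 1)
    (i j : Option X) : 0 ≤ atlasInterp ω m I t i j :=
  add_nonneg (mul_nonneg ht₀ (atlasMatrix_nonneg hω (m + 1) I i j))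
    (mul_nonneg (sub_nonneg.mpr ht₁) (atlasMatrix_nonneg hω m I i j))

lemma atlasInterp_mulVec_none (ω : X → ℝ) (m : ℕ) (I : Finset X) (t : ℝ) (v : Option X → ℝ) :
    (atlasInterp ω m I t *ᵥ v) none = v ⬝ᵥ atlasMatrix ω m I *ᵥ mixVec t := by
  rw [dotProduct_comm, atlasMatrix_mulVec_mixVec]
  simp only [atlasInterp, add_mulVec, smul_mulVec, Pi.add_apply, Pi.smul_apply,
    atlasMatrix_mulVec_none, add_dotProduct, smul_dotProduct]

lemma atlasInterp_mulVec_some (ω : X → ℝ) (m : ℕ) (I : Finset X) (t : ℝ) (v : Option X → ℝ)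
    (x : X) :
    (atlasInterp ω m I t *ᵥ v) (some x) =
      addWeight ω I x * ((v ∘ redirect I x) ⬝ᵥ atlasMatrix ω m (insert x I) *ᵥ mixVec t) := by
  rw [dotProduct_comm, atlasMatrix_mulVec_mixVec]
  simp only [atlasInterp, add_mulVec, smul_mulVec, Pi.add_apply, Pi.smul_apply, smul_eq_mul,
    atlasMatrix_mulVec_some, add_dotProduct, smul_dotProduct]
  ring

lemma atlasMatrix_row_eq_zero (hω : ∀ x, 0 ≤ ω x)
    (h : addWeight ω I x * extWeight ω m (insert x I) = 0) : atlasMatrix ω m I (some x) = 0 := by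
  funext j
  obtain h | h := mul_eq_zero.mp h
  · simp only [atlasMatrix, h, zero_mul, Pi.zero_apply]
  · simp only [atlasMatrix, headRow_eq_zero hω h, Pi.zero_apply, Finset.sum_const_zero, mul_zero]

lemma atlasInterp_row_eq_zero (hω : ∀ x, 0 ≤ ω x) (ht₀ : 0 ≤ t) (ht₁ : t < 1)
    (h : atlasInterp ω m I t (some x) none = 0) : atlasInterp ω m I t (some x) = 0 := by
  have hm : addWeight ω I x * extWeight ω m (insert x I) = 0 := by
    have hsucc := mul_nonneg ht₀ (atlasMatrix_nonneg hω (m + 1) I (some x) none)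
    have hzero := mul_nonneg (sub_pos.mpr ht₁).le (atlasMatrix_nonneg hω m I (some x) none)
    have hright := ((add_eq_zero_iff_of_nonneg hsucc hzero).mp h).2
    rwa [mul_eq_zero_iff_left (sub_pos.mpr ht₁).ne', atlasMatrix_some_none] at hright
  have hsucc : addWeight ω I x * extWeight ω (m + 1) (insert x I) = 0 :=
    mul_eq_zero.mpr ((mul_eq_zero.mp hm).imp_right (extWeight_succ_eq_zero hω))
  funext j
  simp [atlasInterp, atlasMatrix_row_eq_zero hω hm, atlasMatrix_row_eq_zero hω hsucc]

lemma dotProduct_atlasInterp_mulVec_le (hω : ∀ x, 0 ≤ ω x) (ht₀ : 0 < t) (ht₁ : t < 1)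
    (hyp : Hyperbolic (atlasMatrix ω m I))
    (hyp_insert : ∀ x, Addable I x → Hyperbolic (atlasMatrix ω m (insert x I)))
    (v : Option X → ℝ) :
    v ⬝ᵥ atlasInterp ω m I t *ᵥ v ≤
      ∑ i, mixVec t i * (atlasInterp ω m I t *ᵥ v) i ^ 2 / (atlasInterp ω m I t *ᵥ mixVec t) i := by
  have hnone : v ⬝ᵥ atlasMatrix ω m I *ᵥ v ≤
      (v ⬝ᵥ atlasMatrix ω m I *ᵥ mixVec t) ^ 2 / (mixVec t ⬝ᵥ atlasMatrix ω m I *ᵥ mixVec t) :=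
    hyp.dotProduct_mulVec_le (atlasMatrix_nonneg hω m I) (mixVec_pos ht₀ ht₁) v
  have hsome (x : X) : addWeight ω I x *
        ((v ∘ redirect I x) ⬝ᵥ atlasMatrix ω m (insert x I) *ᵥ (v ∘ redirect I x)) ≤
      (atlasInterp ω m I t *ᵥ v) (some x) ^ 2 / (atlasInterp ω m I t *ᵥ mixVec t) (some x) := by
    rw [atlasInterp_mulVec_some, atlasInterp_mulVec_some, mixVec_comp_redirect]
    by_cases hx : Addable I x
    · have hchild := (hyp_insert x hx).dotProduct_mulVec_le (atlasMatrix_nonneg hω m _)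
        (mixVec_pos ht₀ ht₁) (v ∘ redirect I x)
      refine (mul_le_mul_of_nonneg_left hchild (addWeight_nonneg hω I x)).trans_eq ?_
      obtain hzero | hne := eq_or_ne (addWeight ω I x) 0
      · simp only [hzero, zero_mul, div_zero]
      · field_simp
    · simp [addWeight_of_not_addable ω hx]
  calc v ⬝ᵥ atlasInterp ω m I t *ᵥ v
      = (1 - t) * (v ⬝ᵥ atlasMatrix ω m I *ᵥ v) + t * (v ⬝ᵥ atlasMatrix ω (m + 1) I *ᵥ v) := by
        simp only [atlasInterp, add_mulVec, smul_mulVec, dotProduct_add, dotProduct_smul,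
          smul_eq_mul, add_comm]
    _ ≤ _ := by
        have hsucc := (dotProduct_atlasMatrix_succ_le hω m I v).trans
          (Finset.sum_le_sum fun x _ => hsome x)
        simp only [Fintype.sum_option, mul_div_assoc, mixVec, ← Finset.mul_sum,
          atlasInterp_mulVec_none]
        exact add_le_add (mul_le_mul_of_nonneg_left hnone (sub_pos.mpr ht₁).le)
          (mul_le_mul_of_nonneg_left hsucc ht₀.le)

lemma hyperbolic_atlasInterp (hω : ∀ x, 0 ≤ ω x) (ht₀ : 0 < t) (ht₁ : t < 1)
    (hyp : Hyperbolic (atlasMatrix ω m I))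
    (hyp_insert : ∀ x, Addable I x → Hyperbolic (atlasMatrix ω m (insert x I))) :
    Hyperbolic (atlasInterp ω m I t) := by
  refine hyperbolic_of_pullback_inequality (atlasInterp_isSymm ω m I t)
    (atlasInterp_nonneg hω m I ht₀.le ht₁.le) (mixVec_pos ht₀ ht₁) (o := none) (fun i hi h => ?_)
    (dotProduct_atlasInterp_mulVec_le hω ht₀ ht₁ hyp hyp_insert)
  obtain ⟨x, rfl⟩ := Option.ne_none_iff_exists'.mp hi
  exact atlasInterp_row_eq_zero hω ht₀.le ht₁ h

lemma hyperbolic_atlasMatrix_succ (hω : ∀ x, 0 ≤ ω x) (hyp : Hyperbolic (atlasMatrix ω m I))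
    (hyp_insert : ∀ x, Addable I x → Hyperbolic (atlasMatrix ω m (insert x I))) :
    Hyperbolic (atlasMatrix ω (m + 1) I) := by
  have hcont : Continuous (atlasInterp ω m I) :=
    (continuous_id.smul continuous_const).add
      ((continuous_const.sub continuous_id).smul continuous_const)
  have hlim : Tendsto (atlasInterp ω m I) (𝓝[<] 1) (𝓝 (atlasMatrix ω (m + 1) I)) := by
    have hone : atlasInterp ω m I 1 = atlasMatrix ω (m + 1) I := by simp [atlasInterp]
    exact hone ▸ hcont.continuousWithinAt.tendsto
  refine isClosed_setOf_hyperbolic.mem_of_tendsto hlim ?_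
  filter_upwards [Ioo_mem_nhdsLT one_pos] with t ht
  exact hyperbolic_atlasInterp hω ht.1 ht.2 hyp hyp_insert

theorem hyperbolic_atlasMatrix (hω : ∀ x, 0 ≤ ω x) (hCM : ∀ x, ∑ y ∈ covers x, ω y ≤ ω x) (m : ℕ)
    (hI : IsLowerSet (I : Set X)) : Hyperbolic (atlasMatrix ω m I) := by
  induction m generalizing I with
  | zero => exact hyperbolic_atlasMatrix_zero hω hCM hI
  | succ m ih =>
    exact hyperbolic_atlasMatrix_succ hω (ih hI) fun x hx => ih (hx.isLowerSet_insert hI)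

theorem extWeight_mul_extWeight_le_sq (hω : ∀ x, 0 ≤ ω x)
    (hCM : ∀ x, ∑ y ∈ covers x, ω y ≤ ω x) (m : ℕ) (hI : IsLowerSet (I : Set X)) :
    extWeight ω m I * extWeight ω (m + 2) I ≤ extWeight ω (m + 1) I ^ 2 := by
  obtain hzero | hpos := (extWeight_nonneg hω m I).eq_or_lt
  · rw [← hzero, zero_mul]
    exact sq_nonneg _
  have hform (s t : ℝ) : mixVec s ⬝ᵥ atlasMatrix ω m I *ᵥ mixVec t =
      t * (s * extWeight ω (m + 2) I + (1 - s) * extWeight ω (m + 1) I) +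
        (1 - t) * (s * extWeight ω (m + 1) I + (1 - s) * extWeight ω m I) := by
    rw [dotProduct_comm, atlasMatrix_mulVec_mixVec]
    simp only [add_dotProduct, smul_dotProduct, smul_eq_mul, headRow_dotProduct_mixVec]
  have hyp := hyperbolic_atlasMatrix hω hCM m hI (mixVec 1) (mixVec 0)
  simp only [hform, sub_self, sub_zero, zero_mul, one_mul, zero_add, add_zero] at hyp
  rw [mul_comm]
  exact hyp hpos

end Hyperbolicity

section Words

variable {P : Type*} [PartialOrder P] {β γ : List P} {x : P}

lemma feasibleWord_nil : FeasibleWord ([] : List P) := ⟨List.nodup_nil, by simp⟩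

lemma FeasibleWord.of_append (h : FeasibleWord (β ++ γ)) : FeasibleWord β :=
  ⟨h.1.of_append_left, fun l₁ l₂ x hβ => h.2 l₁ (l₂ ++ γ) x (by simp [hβ])⟩

lemma feasibleWord_append_singleton_iff [DecidableEq P] :
    FeasibleWord (β ++ [x]) ↔ FeasibleWord β ∧ Addable β.toFinset x := by
  refine ⟨fun h => ⟨h.of_append, ?_, ?_⟩, fun ⟨hβ, hx⟩ => ⟨?_, fun l₁ l₂ z heq y hy => ?_⟩⟩
  · have hnodup := h.1
    rw [← List.concat_eq_append, List.nodup_concat] at hnodup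
    simpa using hnodup.1
  · simpa using h.2 β [] x rfl
  · rw [← List.concat_eq_append, List.nodup_concat]
    exact ⟨by simpa using hx.1, hβ.1⟩
  · obtain rfl | ⟨l, b, rfl⟩ := List.eq_nil_or_concat' l₂
    · obtain ⟨rfl, hxz⟩ := List.append_inj' heq rfl
      obtain rfl := List.singleton_inj.mp hxz
      exact List.mem_toFinset.mp (hx.2 y hy)
    · rw [← List.cons_append, ← List.append_assoc] at heq
      exact hβ.2 l₁ l z (List.append_inj' heq rfl).1 y hy

lemma sum_feasibleWord_append (ω : X → ℝ) (k : ℕ) {β : List X} (hβ : FeasibleWord β) :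
    (∑ f : Fin k → X, if FeasibleWord (β ++ List.ofFn f) then ((List.ofFn f).map ω).prod else 0) =
      extWeight ω k β.toFinset := by
  induction k generalizing β with
  | zero => simp [hβ, extWeight]
  | succ k ih =>
    rw [← (Fin.consEquiv fun _ : Fin (k + 1) => X).sum_comp, Fintype.sum_prod_type, extWeight]
    refine Finset.sum_congr rfl fun x _ => ?_
    have hofFn (f : Fin k → X) :
        List.ofFn (Fin.consEquiv (fun _ : Fin (k + 1) => X) (x, f)) = x :: List.ofFn f := by
      simp [Fin.consEquiv, List.ofFn_succ]
    have hassoc (f : Fin k → X) : β ++ x :: List.ofFn f = β ++ [x] ++ List.ofFn f :=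
      List.append_cons β x _
    simp only [hofFn, hassoc, List.map_cons, List.prod_cons]
    by_cases hx : Addable β.toFinset x
    · have hβx : FeasibleWord (β ++ [x]) := feasibleWord_append_singleton_iff.mpr ⟨hβ, hx⟩
      have htoFinset : (β ++ [x]).toFinset = insert x β.toFinset := by
        rw [List.toFinset_append, Finset.insert_eq, Finset.union_comm]
        simp
      rw [addWeight_of_addable ω hx, ← htoFinset, ← ih hβx, Finset.mul_sum]
      simp only [mul_ite, mul_zero]
    · have hβx (f : Fin k → X) : ¬FeasibleWord (β ++ [x] ++ List.ofFn f) := fun h =>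
        hx (feasibleWord_append_singleton_iff.mp h.of_append).2
      simp only [hβx, if_false, Finset.sum_const_zero, addWeight_of_not_addable ω hx, zero_mul]

lemma Lw_eq_extWeight (ω : X → ℝ) (k : ℕ) : Lw ω k = extWeight ω k ∅ := by
  rw [Lw, Finset.sum_filter, wordsLen, Finset.sum_image List.ofFn_injective.injOn]
  simpa using sum_feasibleWord_append ω k feasibleWord_nil

end Words

/-- **Log-concavity for poset antimatroids.**  If the positive weight function satisfies
the cover monotonicity property (CM), then `L_ω(k)² ≥ L_ω(k-1)·L_ω(k+1)`. -/
theorem poset_antimatroid_log_concavity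
    (ω : X → ℝ) (hω : ∀ x, 0 < ω x)
    (hCM : ∀ x : X, (∑ y ∈ covers x, ω y) ≤ ω x)
    (k : ℕ) (hk1 : 1 ≤ k) (hk2 : k < Fintype.card X) :
    Lw ω (k - 1) * Lw ω (k + 1) ≤ (Lw ω k) ^ 2 := by
  obtain ⟨m, rfl⟩ := Nat.exists_eq_add_of_le' hk1
  rw [Nat.add_sub_cancel, Lw_eq_extWeight, Lw_eq_extWeight, Lw_eq_extWeight]
  exact extWeight_mul_extWeight_le_sq (fun x => (hω x).le) hCM m (by simp [IsLowerSet])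
end
end
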